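/- Let 865/886 < γ < 1, a ∈ ℤ \ {0}, 1 < c < 3 with c ≠ 2 be fixed and let ε > 0 be sufficiently small. Set θ = (443/55)γ − 173/22 − ε, and suppose X^{1−ε} ≤ N ≤ X, H = N^{1−γ+ε}, N^θ ≤ D ≤ N^{θ+ε/2}, and |t| ≤ X^{1/4−c}. Let (a(m)) be complex numbers with |a(m)| ≤ 1, let b(l) = 1 for all l or b(l) = log l for all l, and let c(d,h) be complex numbers with |c(d,h)| = 1. Define S_I = Σ_{m ∼ M} Σ_{l : N < ml ≤ 2N} a(m) b(l) G(ml), where G(n) = Σ_{1 ≤ h ≤ H} F_h(n) e(t n^c − h n^γ) and F_h(n) = Σ_{d ≤ D, gcd(d,a)=1, d | n−a} c(d,h). If M ≪ N^{(31/3)γ − 19/2 − θ − ε}, then S_I ≪ N^{1−ε}. -/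

import Mathlib

/-- `e(t) = exp(2πit)`. -/
noncomputable def e (t : ℝ) : ℂ := Complex.exp (2 * Real.pi * Complex.I * t)

/-!
Write `δ = 1 - γ`. Since `d` is coprime to `a`, for each `m` at most one residue class of `l` modulo
`d` satisfies `d ∣ m l - a`, so `S_I` is bounded by a sum over `h` and `d` of sums over `m` of
absolute values of exponential sums over `l ≡ ρ (mod d)`. As `h ≤ N^(δ + ε)` and the sum over `d` is
harmonic, it suffices to bound each sum over `m` by `N^(1 - 21/20 δ) / d`, up to logarithms. The
perturbation `t x ^ c` of the phase is dominated by `h x ^ γ`.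

* If `M d ≤ N^(1/2 - 11/10 δ)`, the progression of `l` is long enough for van der Corput's second
  derivative test, which follows from the Kusmin–Landau inequality; partial summation removes the
  weight `b`.
* Otherwise `m` is the long variable. Two Cauchy–Schwarz steps, over boxes of consecutive terms of
  the progression with sides `N^(12 δ)` and `N^(9/2 δ)`, remove the absolute values and difference
  the phase twice in `l`; the second derivative test is then applied to the sum over `m`.
-/

open Finset Filter ComplexConjugate

section Exponential

theorem e_add (x y : ℝ) : e (x + y) = e x * e y := by
  simp only [e, ← Complex.exp_add, Complex.ofReal_add, mul_add]

theorem e_eq_exp_ofReal_mul_I (x : ℝ) :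
    e x = Complex.exp ((2 * Real.pi * x : ℝ) * Complex.I) := by
  rw [e]; push_cast; ring_nf

@[simp]
theorem norm_e (x : ℝ) : ‖e x‖ = 1 := by
  rw [e_eq_exp_ofReal_mul_I, Complex.norm_exp_ofReal_mul_I]

theorem conj_e (x : ℝ) : conj (e x) = e (-x) := by
  rw [e_eq_exp_ofReal_mul_I, e_eq_exp_ofReal_mul_I, ← Complex.exp_conj, map_mul, Complex.conj_I,
    Complex.conj_ofReal]
  push_cast; ring_nf

theorem e_sub_intCast (x : ℝ) (ν : ℤ) : e (x - ν) = e x := by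
  rw [e, e, ← Complex.exp_periodic.sub_int_mul_eq (x := 2 * Real.pi * Complex.I * x) ν]
  push_cast; ring_nf

theorem norm_one_sub_e (g : ℝ) : ‖1 - e g‖ = 2 * |Real.sin (Real.pi * g)| := by
  rw [norm_sub_rev, e_eq_exp_ofReal_mul_I, mul_comm, Complex.norm_exp_I_mul_ofReal_sub_one,
    Real.norm_eq_abs, abs_mul, abs_two]
  ring_nf

theorem inv_one_sub_e {g : ℝ} (hg : Real.sin (Real.pi * g) ≠ 0) :
    (1 - e g)⁻¹ = (1 + Real.cot (Real.pi * g) * Complex.I) / 2 := by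
  refine inv_eq_of_mul_eq_one_left ?_
  rw [e_eq_exp_ofReal_mul_I, Complex.exp_mul_I, ← Complex.ofReal_cos, ← Complex.ofReal_sin,
    mul_assoc, Real.cos_two_mul, Real.sin_two_mul, Real.cot_eq_cos_div_sin]
  have hsin : (Real.sin (Real.pi * g) : ℂ) ≠ 0 := mod_cast hg
  have hsq : (Real.sin (Real.pi * g) : ℂ) ^ 2 + (Real.cos (Real.pi * g) : ℂ) ^ 2 = 1 :=
    mod_cast Real.sin_sq_add_cos_sq (Real.pi * g)
  push_cast at hsin hsq ⊢
  field_simp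
  linear_combination (-2 * Complex.cos (Real.pi * g) * Complex.I) * hsq -
    2 * Complex.sin (Real.pi * g) * Complex.cos (Real.pi * g) ^ 2 * Complex.I_sq

theorem two_mul_le_sin_pi_mul {g Δ : ℝ} (hΔ : 0 ≤ Δ) (hg : g ∈ Set.Icc Δ (1 - Δ)) :
    2 * Δ ≤ Real.sin (Real.pi * g) := by
  have jordan {y : ℝ} (h0 : 0 ≤ y) (h1 : y ≤ 1 / 2) : 2 * y ≤ Real.sin (Real.pi * y) := by
    have h := Real.mul_le_sin (x := Real.pi * y) (by positivity) (by nlinarith [Real.pi_pos])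
    rwa [← mul_assoc, div_mul_cancel₀ _ Real.pi_ne_zero] at h
  rcases le_total g (1 / 2) with h | h
  · linarith [jordan (hΔ.trans hg.1) h, hg.1]
  · have := jordan (y := 1 - g) (by linarith [hg.2]) (by linarith)
    rw [mul_one_sub Real.pi, Real.sin_pi_sub] at this
    linarith [hg.2]

theorem norm_inv_one_sub_e_le {g Δ : ℝ} (hΔ : 0 < Δ) (hg : g ∈ Set.Icc Δ (1 - Δ)) :
    ‖(1 - e g)⁻¹‖ ≤ 1 / (4 * Δ) := by
  rw [norm_inv, norm_one_sub_e, ← one_div]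
  have := (two_mul_le_sin_pi_mul hΔ.le hg).trans (le_abs_self _)
  exact one_div_le_one_div_of_le (by positivity) (by linarith)

theorem abs_cot_pi_mul_le {g Δ : ℝ} (hΔ : 0 < Δ) (hg : g ∈ Set.Icc Δ (1 - Δ)) :
    |Real.cot (Real.pi * g)| ≤ 1 / (2 * Δ) := by
  have hsin := two_mul_le_sin_pi_mul hΔ.le hg
  rw [Real.cot_eq_cos_div_sin, abs_div, abs_of_pos (a := Real.sin _) (by linarith)]
  gcongr
  exact Real.abs_cos_le_one _

theorem norm_inv_one_sub_e_sub {u v : ℝ} (hu : 0 < u) (huv : u ≤ v) (hv : v < 1) :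
    ‖(1 - e v)⁻¹ - (1 - e u)⁻¹‖ = (Real.cot (Real.pi * u) - Real.cot (Real.pi * v)) / 2 := by
  have hπ := Real.pi_pos
  have sin_pos {y : ℝ} (h0 : 0 < y) (h1 : y < 1) : 0 < Real.sin (Real.pi * y) :=
    Real.sin_pos_of_pos_of_lt_pi (by positivity) (by nlinarith)
  have hsu := sin_pos hu (huv.trans_lt hv)
  have hsv := sin_pos (hu.trans_le huv) hv
  have hcot : 0 ≤ Real.cot (Real.pi * u) - Real.cot (Real.pi * v) := by
    rw [Real.cot_eq_cos_div_sin, Real.cot_eq_cos_div_sin, div_sub_div _ _ hsu.ne' hsv.ne']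
    have := Real.sin_nonneg_of_nonneg_of_le_pi (x := Real.pi * v - Real.pi * u)
      (by nlinarith) (by nlinarith)
    rw [Real.sin_sub] at this
    exact div_nonneg (by linarith) (by positivity)
  rw [inv_one_sub_e hsu.ne', inv_one_sub_e hsv.ne']
  have : (1 + Real.cot (Real.pi * v) * Complex.I) / 2 - (1 + Real.cot (Real.pi * u) * Complex.I) / 2
      = ((-((Real.cot (Real.pi * u) - Real.cot (Real.pi * v)) / 2) : ℝ) : ℂ) * Complex.I := by
    push_cast; ring
  rw [this, norm_mul, Complex.norm_I, mul_one, Complex.norm_real, norm_neg,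
    Real.norm_of_nonneg (by positivity)]

end Exponential

section KusminLandau

theorem norm_sum_mul_sub_succ_le (w u : ℕ → ℂ) (hu : ∀ n, ‖u n‖ ≤ 1) (L : ℕ) :
    ‖∑ n ∈ range (L + 1), w n * (u n - u (n + 1))‖ ≤
      ‖w 0‖ + ‖w L‖ + ∑ n ∈ range L, ‖w (n + 1) - w n‖ := by
  have parts : ∑ n ∈ range (L + 1), w n * (u n - u (n + 1)) =
      w 0 * u 0 - w L * u (L + 1) + ∑ n ∈ range L, (w (n + 1) - w n) * u (n + 1) := by
    induction L with
    | zero => simp [mul_sub]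
    | succ L ih => rw [sum_range_succ, ih, sum_range_succ _ L]; ring
  have hmul (z : ℂ) (n : ℕ) : ‖z * u n‖ ≤ ‖z‖ := by
    rw [norm_mul]; exact mul_le_of_le_one_right (norm_nonneg z) (hu n)
  rw [parts]
  refine (norm_add_le _ _).trans (add_le_add ?_ ?_)
  · exact (norm_sub_le _ _).trans (add_le_add (hmul _ _) (hmul _ _))
  · exact norm_sum_le_of_le _ fun n _ ↦ hmul _ _

/-- The sequence of increments `x (n + 1) - x n`. -/
def increment (x : ℕ → ℝ) (n : ℕ) : ℝ := x (n + 1) - x n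

theorem norm_sum_range_e_le (x : ℕ → ℝ) (L : ℕ) {Δ : ℝ} {ν : ℤ} (hΔ : 0 < Δ)
    (hmono : ∀ n < L, increment x n ≤ increment x (n + 1))
    (hmem : ∀ n ≤ L, increment x n ∈ Set.Icc (ν + Δ) (ν + 1 - Δ)) :
    ‖∑ n ∈ range (L + 1), e (x n)‖ ≤ 1 / Δ := by
  set g : ℕ → ℝ := fun n ↦ increment x n - ν with hg
  have g_mem (n) (hn : n ≤ L) : g n ∈ Set.Icc Δ (1 - Δ) :=
    ⟨by linarith [(hmem n hn).1], by linarith [(hmem n hn).2]⟩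
  have sin_ne (n) (hn : n ≤ L) : 1 - e (g n) ≠ 0 := by
    rw [← norm_ne_zero_iff, norm_one_sub_e]
    have := two_mul_le_sin_pi_mul hΔ.le (g_mem n hn)
    have : 0 < |Real.sin (Real.pi * g n)| := abs_pos.2 (by linarith)
    positivity
  have e_eq (n) (hn : n ∈ range (L + 1)) :
      e (x n) = (1 - e (g n))⁻¹ * (e (x n) - e (x (n + 1))) := by
    have hsucc : e (x (n + 1)) = e (x n) * e (g n) := by
      rw [hg, e_sub_intCast, ← e_add, increment, add_sub_cancel]
    rw [hsucc, ← mul_one_sub, mul_left_comm,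
      inv_mul_cancel₀ (sin_ne n (Nat.lt_succ_iff.1 (mem_range.1 hn))), mul_one]
  have variation : ∑ n ∈ range L, ‖(1 - e (g (n + 1)))⁻¹ - (1 - e (g n))⁻¹‖ =
      (Real.cot (Real.pi * g 0) - Real.cot (Real.pi * g L)) / 2 := by
    rw [← sum_range_sub' (fun n ↦ Real.cot (Real.pi * g n)), sum_div]
    refine sum_congr rfl fun n hn ↦ ?_
    have hn := mem_range.1 hn
    exact norm_inv_one_sub_e_sub (hΔ.trans_le (g_mem n hn.le).1)
      (sub_le_sub_right (hmono n hn) _) (by linarith [(g_mem (n + 1) hn).2])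
  rw [sum_congr rfl e_eq]
  refine (norm_sum_mul_sub_succ_le (fun n ↦ (1 - e (g n))⁻¹) _ (fun n ↦ (norm_e (x n)).le) L).trans
    ?_
  rw [variation]
  have cot_zero := (abs_le.1 (abs_cot_pi_mul_le hΔ (g_mem 0 (Nat.zero_le L)))).2
  have cot_last := (abs_le.1 (abs_cot_pi_mul_le hΔ (g_mem L le_rfl))).1
  have inv_zero := norm_inv_one_sub_e_le hΔ (g_mem 0 (Nat.zero_le L))
  have inv_last := norm_inv_one_sub_e_le hΔ (g_mem L le_rfl)
  have : 1 / Δ = 1 / (4 * Δ) + 1 / (4 * Δ) + 1 / (2 * Δ) := by field_simp; norm_num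
  linarith

theorem exists_eq_Ico_of_ordConnected {S : Finset ℕ} (hS : (S : Set ℕ).OrdConnected)
    (hne : S.Nonempty) : ∃ a L, S = Ico a (a + (L + 1)) := by
  refine ⟨S.min' hne, S.max' hne - S.min' hne, ?_⟩
  rw [← add_assoc, Nat.add_sub_cancel' (S.min'_le_max' hne)]
  ext n
  rw [mem_Ico, Nat.lt_succ_iff]
  exact ⟨fun hn ↦ ⟨S.min'_le n hn, S.le_max' n hn⟩,
    fun hn ↦ hS.out (S.min'_mem hne) (S.max'_mem hne) hn⟩

/-- The **Kusmin–Landau inequality**. -/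
theorem norm_sum_e_le_of_increment_mem {S : Finset ℕ} (hS : (S : Set ℕ).OrdConnected)
    {x : ℕ → ℝ} {Δ : ℝ} {ν : ℤ} (hΔ : 0 < Δ) (hmono : MonotoneOn (increment x) S)
    (hmem : ∀ n ∈ S, increment x n ∈ Set.Icc (ν + Δ) (ν + 1 - Δ)) :
    ‖∑ n ∈ S, e (x n)‖ ≤ 1 / Δ := by
  rcases S.eq_empty_or_nonempty with rfl | hne
  · simp [hΔ.le]
  obtain ⟨a, L, rfl⟩ := exists_eq_Ico_of_ordConnected hS hne
  have mem {n} (hn : n ≤ L) : a + n ∈ Ico a (a + (L + 1)) := by rw [mem_Ico]; lia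
  rw [sum_Ico_eq_sum_range, Nat.add_sub_cancel_left]
  exact norm_sum_range_e_le (fun n ↦ x (a + n)) L hΔ
    (fun n hn ↦ hmono (mem hn.le) (mem hn) (by lia)) (fun n hn ↦ hmem _ (mem hn))

end KusminLandau

section VanDerCorput

theorem card_le_of_forall_sub_le {T : Finset ℤ} {ℓ : ℝ} (hℓ : 0 ≤ ℓ)
    (hT : ∀ x ∈ T, ∀ y ∈ T, (y : ℝ) - x ≤ ℓ) : (#T : ℝ) ≤ ℓ + 1 := by
  rcases T.eq_empty_or_nonempty with rfl | hne
  · simpa only [card_empty, Nat.cast_zero] using add_nonneg hℓ zero_le_one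
  have hsub : T ⊆ Icc (T.min' hne) (T.max' hne) :=
    fun n hn ↦ mem_Icc.2 ⟨T.min'_le n hn, T.le_max' n hn⟩
  have hcard := card_le_card hsub
  have hle := T.min'_le_max' hne
  have hlen := hT _ (T.min'_mem hne) _ (T.max'_mem hne)
  rw [Int.card_Icc] at hcard
  have : (#T : ℤ) ≤ T.max' hne + 1 - T.min' hne := by lia
  have : (#T : ℝ) ≤ T.max' hne + 1 - T.min' hne := mod_cast this
  linarith

theorem card_le_of_forall_natCast_sub_le {T : Finset ℕ} {ℓ : ℝ} (hℓ : 0 ≤ ℓ)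
    (hT : ∀ x ∈ T, ∀ y ∈ T, (y : ℝ) - x ≤ ℓ) : (#T : ℝ) ≤ ℓ + 1 := by
  rw [← T.card_map (Nat.castEmbedding (R := ℤ))]
  exact card_le_of_forall_sub_le hℓ (by simpa using hT)

theorem ordConnected_filter_of_monotoneOn {S : Finset ℕ} (hS : (S : Set ℕ).OrdConnected)
    {g : ℕ → ℝ} (hg : MonotoneOn g S) {p : ℝ → Prop} [DecidablePred p]
    (hp : {y | p y}.OrdConnected) :
    ((S.filter fun n ↦ p (g n) : Finset ℕ) : Set ℕ).OrdConnected := by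
  rw [coe_filter]
  refine ⟨fun m hm n hn k hk ↦ ?_⟩
  have hkS := hS.out hm.1 hn.1 hk
  exact ⟨hkS, hp.out hm.2 hn.2 ⟨hg hm.1 hkS hk.1, hg hkS hn.1 hk.2⟩⟩

variable {S : Finset ℕ} {x : ℕ → ℝ} {μ A : ℝ}

theorem monotoneOn_of_forall_mul_le_sub {g : ℕ → ℝ} (hμ : 0 ≤ μ)
    (hg : ∀ m ∈ S, ∀ n ∈ S, m < n → μ * (n - m) ≤ g n - g m) : MonotoneOn g S := by
  intro m hm n hn hmn
  rcases hmn.eq_or_lt with rfl | hlt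
  · rfl
  · have : (m : ℝ) ≤ n := mod_cast hmn
    nlinarith [hg m hm n hn hlt]

theorem card_filter_mem_Icc_le {g : ℕ → ℝ} (hμ : 0 < μ)
    (hg : ∀ m ∈ S, ∀ n ∈ S, m < n → μ * (n - m) ≤ g n - g m) {y z : ℝ} (hyz : y ≤ z) :
    (#{n ∈ S | y ≤ g n ∧ g n ≤ z} : ℝ) ≤ (z - y) / μ + 1 := by
  have hyz0 : 0 ≤ (z - y) / μ := div_nonneg (sub_nonneg.2 hyz) hμ.le
  refine card_le_of_forall_natCast_sub_le hyz0 fun m hm n hn ↦ ?_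
  rw [mem_filter] at hm hn
  rcases lt_or_ge m n with hlt | hge
  · rw [le_div_iff₀' hμ]
    linarith [hg m hm.1 n hn.1 hlt]
  · have : (n : ℝ) ≤ m := mod_cast hge
    linarith

theorem norm_sum_e_le_of_increment_mem_near_int (hS : (S : Set ℕ).OrdConnected) (hμ : 0 < μ)
    (hμ' : √μ ≤ 1 / 2)
    (hx : ∀ m ∈ S, ∀ n ∈ S, m < n → μ * (n - m) ≤ increment x n - increment x m) {ν : ℤ}
    (hν : ∀ n ∈ S, increment x n ∈ Set.Icc (ν - 1 / 2 : ℝ) (ν + 1 / 2)) :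
    ‖∑ n ∈ S, e (x n)‖ ≤ 5 / √μ := by
  have hs : 0 < √μ := Real.sqrt_pos.2 hμ
  have hmono := monotoneOn_of_forall_mul_le_sub hμ.le hx
  have below : ‖∑ n ∈ S with increment x n < ν - √μ, e (x n)‖ ≤ 1 / √μ := by
    refine norm_sum_e_le_of_increment_mem (ν := ν - 1)
      (ordConnected_filter_of_monotoneOn hS hmono Set.ordConnected_Iio) hs
      (hmono.mono (coe_subset.2 (filter_subset _ S))) fun n hn ↦ ?_
    rw [mem_filter] at hn
    push_cast
    constructor <;> linarith [(hν n hn.1).1]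
  have above : ‖∑ n ∈ S with ν + √μ < increment x n, e (x n)‖ ≤ 1 / √μ := by
    refine norm_sum_e_le_of_increment_mem (ν := ν)
      (ordConnected_filter_of_monotoneOn hS hmono Set.ordConnected_Ioi) hs
      (hmono.mono (coe_subset.2 (filter_subset _ S))) fun n hn ↦ ?_
    rw [mem_filter] at hn
    constructor <;> linarith [(hν n hn.1).2]
  have near : ‖∑ n ∈ S with ν - √μ ≤ increment x n ∧ increment x n ≤ ν + √μ, e (x n)‖
      ≤ 3 / √μ := by
    refine (norm_sum_le_of_le _ fun n _ ↦ (norm_e _).le).trans ?_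
    rw [sum_const, nsmul_one]
    refine (card_filter_mem_Icc_le hμ hx (by linarith)).trans ?_
    calc (ν + √μ - (ν - √μ)) / μ + 1 = 2 * √μ / (√μ * √μ) + 1 := by
          rw [Real.mul_self_sqrt hμ.le]; ring
      _ = (2 + √μ) / √μ := by field_simp
      _ ≤ 3 / √μ := by gcongr; linarith
  have split : ∑ n ∈ S, e (x n) = ∑ n ∈ S with increment x n < ν - √μ, e (x n) +
      ∑ n ∈ S with ν + √μ < increment x n, e (x n) +
      ∑ n ∈ S with ν - √μ ≤ increment x n ∧ increment x n ≤ ν + √μ, e (x n) := by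
    simp only [sum_filter, ← sum_add_distrib]
    refine sum_congr rfl fun n _ ↦ ?_
    rcases lt_trichotomy (increment x n) (ν - √μ) with _ | _ | _
    all_goals split_ifs <;> grind
  rw [split]
  refine (norm_add₃_le).trans ((add_le_add_three below above near).trans_eq ?_)
  ring

theorem card_image_round_increment_le (hS : (S : Set ℕ).OrdConnected) (hμ : 0 ≤ μ) (hA : 0 ≤ A)
    (hmono : MonotoneOn (increment x) S)
    (hx : ∀ m ∈ S, ∀ n ∈ S, m < n → increment x n - increment x m ≤ A * μ * (n - m)) :
    (#(S.image fun n ↦ round (increment x n)) : ℝ) ≤ A * μ * #S + 2 := by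
  have key : ∀ y ∈ S.image (fun n ↦ round (increment x n)),
      ∀ z ∈ S.image (fun n ↦ round (increment x n)), (z : ℝ) - y ≤ A * μ * #S + 1 := by
    intro y hy z hz
    obtain ⟨m, hm, rfl⟩ := mem_image.1 hy
    obtain ⟨n, hn, rfl⟩ := mem_image.1 hz
    have hy := abs_le.1 (abs_sub_round (increment x m))
    have hz := abs_le.1 (abs_sub_round (increment x n))
    have hnonneg : 0 ≤ A * μ * #S := by positivity
    rcases lt_or_ge m n with hlt | hge
    · have hcard : n - m ≤ #S := by
        rw [← Nat.card_Ico]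
        exact card_le_card fun k hk ↦ hS.out hm hn ⟨(mem_Ico.1 hk).1, (mem_Ico.1 hk).2.le⟩
      have hcard : (n : ℝ) - m ≤ #S := by rw [← Nat.cast_sub hlt.le]; exact mod_cast hcard
      have := mul_le_mul_of_nonneg_left hcard (mul_nonneg hA hμ)
      linarith [hx m hm n hn hlt]
    · linarith [hmono hn hm hge]
  linarith [card_le_of_forall_sub_le (by positivity) key]

theorem norm_sum_e_le_of_increment_sub_le (hS : (S : Set ℕ).OrdConnected) (hμ : 0 < μ)
    (hA : 1 ≤ A)
    (hx : ∀ m ∈ S, ∀ n ∈ S, m < n →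
      increment x n - increment x m ∈ Set.Icc (μ * (n - m)) (A * μ * (n - m))) :
    ‖∑ n ∈ S, e (x n)‖ ≤ 5 * A * (#S * √μ) + 10 / √μ := by
  have hs : 0 < √μ := Real.sqrt_pos.2 hμ
  rcases lt_or_ge (1 / 2) (√μ) with hlarge | hsmall
  · refine (norm_sum_le_of_le _ fun n _ ↦ (norm_e _).le).trans ?_
    rw [sum_const, nsmul_one]
    have h1 : (#S : ℝ) ≤ 2 * (#S * √μ) := by nlinarith [(Nat.cast_nonneg #S : (0 : ℝ) ≤ #S)]
    have h2 : 0 ≤ (A - 1) * (#S * √μ) := mul_nonneg (by linarith) (by positivity)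
    have h3 : 0 ≤ 10 / √μ := by positivity
    nlinarith
  have hlower (m) (hm : m ∈ S) (n) (hn : n ∈ S) (hmn : m < n) := (hx m hm n hn hmn).1
  have hmono := monotoneOn_of_forall_mul_le_sub hμ.le hlower
  have fiber (ν : ℤ) : ‖∑ n ∈ S with round (increment x n) = ν, e (x n)‖ ≤ 5 / √μ := by
    refine norm_sum_e_le_of_increment_mem_near_int (ν := ν)
      (ordConnected_filter_of_monotoneOn hS hmono (p := fun y ↦ round y = ν) ?_)
      hμ hsmall ?_ ?_
    · rw [show {y : ℝ | round y = ν} = round ⁻¹' {ν} from rfl]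
      exact Set.ordConnected_singleton.preimage_mono fun y z hyz ↦ by
        simpa only [round_eq] using Int.floor_mono (add_le_add_left hyz _)
    · exact fun m hm n hn ↦ hlower m (mem_filter.1 hm).1 n (mem_filter.1 hn).1
    · intro n hn
      rw [← (mem_filter.1 hn).2]
      have := abs_le.1 (abs_sub_round (increment x n))
      constructor <;> linarith
  rw [← sum_fiberwise_of_maps_to (t := S.image fun n ↦ round (increment x n))
    fun n hn ↦ mem_image_of_mem _ hn]
  refine (norm_sum_le_of_le _ fun ν _ ↦ fiber ν).trans ?_
  rw [sum_const, nsmul_eq_mul]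
  have hcard := card_image_round_increment_le hS hμ.le (by linarith) hmono
    fun m hm n hn hmn ↦ (hx m hm n hn hmn).2
  calc (#(S.image fun n ↦ round (increment x n)) : ℝ) * (5 / √μ)
      ≤ (A * (√μ * √μ) * #S + 2) * (5 / √μ) := by
        rw [Real.mul_self_sqrt hμ.le]; gcongr
    _ = 5 * A * (#S * √μ) + 10 / √μ := by field_simp; ring

/-- The **van der Corput second derivative test**. Only increments between points of `S` are
constrained, so that nothing is assumed about `x` beyond the last point of `S`. -/
theorem norm_sum_e_le_of_increment_sub_mem (hS : (S : Set ℕ).OrdConnected) (hμ : 0 < μ)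
    (hA : 1 ≤ A)
    (hx : ∀ m ∈ S, ∀ n, n + 1 ∈ S → m < n →
      increment x n - increment x m ∈ Set.Icc (μ * (n - m)) (A * μ * (n - m))) :
    ‖∑ n ∈ S, e (x n)‖ ≤ 6 * A * (#S * √μ) + 11 / √μ := by
  rcases S.eq_empty_or_nonempty with rfl | hne
  · simp only [sum_empty, norm_zero, card_empty, Nat.cast_zero, zero_mul, mul_zero, zero_add]
    positivity
  obtain ⟨a, L, rfl⟩ := exists_eq_Ico_of_ordConnected hS hne
  have : 0 < √μ := Real.sqrt_pos.2 hμ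
  have initial : ‖∑ n ∈ Ico a (a + L), e (x n)‖ ≤ 5 * A * (L * √μ) + 10 / √μ := by
    have := norm_sum_e_le_of_increment_sub_le (S := Ico a (a + L)) (x := x)
      (by rw [coe_Ico]; exact Set.ordConnected_Ico) hμ hA fun m hm n hn hmn ↦
        hx m (by rw [mem_Ico] at *; lia) n (by rw [mem_Ico] at *; lia) hmn
    rwa [Nat.card_Ico, Nat.add_sub_cancel_left] at this
  have last : 1 ≤ (L + 1) * √μ + 1 / √μ := by
    rw [← sub_nonneg]
    have : (L + 1) * √μ + 1 / √μ - 1 = (L * √μ ^ 2 + (√μ - 1) ^ 2 + √μ) / √μ := by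
      field_simp; ring
    rw [this]; positivity
  rw [← add_assoc a, sum_Ico_succ_top (by lia), Nat.card_Ico, Nat.add_assoc,
    Nat.add_sub_cancel_left]
  refine (norm_add_le _ _).trans ?_
  rw [norm_e]
  push_cast
  calc ‖∑ n ∈ Ico a (a + L), e (x n)‖ + 1
      ≤ 5 * A * (L * √μ) + 10 / √μ + ((L + 1) * √μ + 1 / √μ) := add_le_add initial last
    _ ≤ 5 * A * ((L + 1) * √μ) + 10 / √μ + (A * ((L + 1) * √μ) + 1 / √μ) := by
        gcongr ?_ + _ + (?_ + _)
        · gcongr; linarith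
        · exact le_mul_of_one_le_left (by positivity) hA
    _ = 6 * A * ((L + 1) * √μ) + 11 / √μ := by ring

end VanDerCorput

section AbelSummation

theorem norm_sum_smul_le_of_monotoneOn {ι V : Type*} [LinearOrder ι] [SeminormedAddCommGroup V]
    [NormedSpace ℝ V] {S : Finset ι} {b : ι → ℝ} {z : ι → V} {B E : ℝ} (hB : 0 ≤ B) (hE : 0 ≤ E)
    (hb : MonotoneOn b S) (hb0 : ∀ n ∈ S, 0 ≤ b n) (hbB : ∀ n ∈ S, b n ≤ B)
    (hz : ∀ j ∈ S, ‖∑ n ∈ S with j ≤ n, z n‖ ≤ E) : ‖∑ n ∈ S, b n • z n‖ ≤ B * E := by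
  induction S using Finset.induction_on_min generalizing b B with
  | empty => simpa using mul_nonneg hB hE
  | insert a s ha ih =>
    have has : a ∉ s := fun h ↦ lt_irrefl _ (ha a h)
    have tail (j) (hj : j ∈ s) : ‖∑ n ∈ s with j ≤ n, z n‖ ≤ E := by
      have := hz j (mem_insert_of_mem hj)
      rwa [filter_insert, if_neg (ha j hj).not_ge] at this
    have whole : ‖∑ n ∈ insert a s, z n‖ ≤ E := by
      have := hz a (mem_insert_self a s)
      rwa [filter_true_of_mem fun n hn ↦ (mem_insert.1 hn).elim (·.ge) fun h ↦ (ha n h).le] at this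
    have peel : ∑ n ∈ insert a s, b n • z n =
        b a • ∑ n ∈ insert a s, z n + ∑ n ∈ s, (b n - b a) • z n := by
      simp only [sum_insert has, sub_smul, sum_sub_distrib, smul_add, smul_sum]
      abel
    have rest := ih (b := fun n ↦ b n - b a) (B := B - b a)
      (sub_nonneg.2 (hbB a (mem_insert_self a s)))
      (fun m hm n hn hmn ↦ sub_le_sub_right
        (hb (mem_insert_of_mem hm) (mem_insert_of_mem hn) hmn) _)
      (fun n hn ↦ sub_nonneg.2 (hb (mem_insert_self a s) (mem_insert_of_mem hn) (ha n hn).le))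
      (fun n hn ↦ sub_le_sub_right (hbB n (mem_insert_of_mem hn)) _) tail
    have hba := hb0 a (mem_insert_self a s)
    calc ‖∑ n ∈ insert a s, b n • z n‖
        ≤ ‖b a • ∑ n ∈ insert a s, z n‖ + ‖∑ n ∈ s, (b n - b a) • z n‖ := by
          rw [peel]; exact norm_add_le _ _
      _ ≤ b a * E + (B - b a) * E := by
          rw [norm_smul, Real.norm_of_nonneg hba]; gcongr
      _ = B * E := by ring

end AbelSummation

section BoxInequality

variable {ι κ σ τ : Type*}

theorem sum_norm_sum_sq_le (J : Finset ι) (Q : Finset τ) (z : ι → τ → ℂ) :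
    ∑ j ∈ J, ‖∑ q ∈ Q, z j q‖ ^ 2 ≤ ∑ q ∈ Q, ∑ q' ∈ Q, ‖∑ j ∈ J, z j q * conj (z j q')‖ := by
  have expand : ((∑ j ∈ J, ‖∑ q ∈ Q, z j q‖ ^ 2 : ℝ) : ℂ) =
      ∑ q ∈ Q, ∑ q' ∈ Q, ∑ j ∈ J, z j q * conj (z j q') := by
    push_cast
    simp only [← Complex.mul_conj', map_sum, sum_mul_sum]
    rw [sum_comm]
    exact sum_congr rfl fun q _ ↦ sum_comm
  rw [← Real.norm_of_nonneg (sum_nonneg fun j _ ↦ sq_nonneg _), ← Complex.norm_real, expand]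
  exact norm_sum_le_of_le _ fun q _ ↦ norm_sum_le _ _

/-- The correlation over `J` of the corners of the box with sides `{s, s'}` and `{q, q'}`; it
arises from two applications of the Cauchy–Schwarz inequality, one for each side. -/
def boxCorrelation (J : Finset ι) (z : ι → σ → τ → ℂ) (s s' : σ) (q q' : τ) : ℂ :=
  ∑ j ∈ J, z j s q * conj (z j s q') * conj (z j s' q * conj (z j s' q'))

variable {J : Finset ι} {S : Finset σ} {Q : Finset τ}

theorem conj_boxCorrelation (z : ι → σ → τ → ℂ) (s s' : σ) (q q' : τ) :
    conj (boxCorrelation J z s s' q q') = boxCorrelation J z s' s q q' := by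
  simp only [boxCorrelation, map_sum, map_mul, Complex.conj_conj]
  exact sum_congr rfl fun j _ ↦ by ring

theorem boxCorrelation_swap_swap (z : ι → σ → τ → ℂ) (s s' : σ) (q q' : τ) :
    boxCorrelation J z s' s q' q = boxCorrelation J z s s' q q' := by
  simp only [boxCorrelation, map_mul, Complex.conj_conj]
  exact sum_congr rfl fun j _ ↦ by ring

theorem norm_boxCorrelation_le_card {z : ι → σ → τ → ℂ} {B : ℝ} (hz : ∀ j s q, ‖z j s q‖ ≤ B)
    (s s' : σ) (q q' : τ) : ‖boxCorrelation J z s s' q q'‖ ≤ #J * B ^ 4 := by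
  rw [← nsmul_eq_mul, ← sum_const]
  refine norm_sum_le_of_le _ fun j _ ↦ ?_
  have hB : 0 ≤ B := (norm_nonneg _).trans (hz j s q)
  simp only [norm_mul, RCLike.norm_conj]
  calc ‖z j s q‖ * ‖z j s q'‖ * (‖z j s' q‖ * ‖z j s' q'‖) ≤ B * B * (B * B) := by
        gcongr <;> apply hz
    _ = B ^ 4 := by ring

theorem sum_norm_sum_sum_pow_four_le (z : ι → σ → τ → ℂ) :
    ∑ j ∈ J, ‖∑ s ∈ S, ∑ q ∈ Q, z j s q‖ ^ 4 ≤ ((#S : ℝ) * #Q) ^ 2 *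
      ∑ q ∈ Q, ∑ q' ∈ Q, ∑ s ∈ S, ∑ s' ∈ S, ‖boxCorrelation J z s s' q q'‖ := by
  have cauchySchwarz (j : ι) : ‖∑ s ∈ S, ∑ q ∈ Q, z j s q‖ ^ 4 ≤ ((#S : ℝ) * #Q) ^ 2 *
      ∑ q ∈ Q, ∑ q' ∈ Q, ‖∑ s ∈ S, z j s q * conj (z j s q')‖ ^ 2 := by
    calc ‖∑ s ∈ S, ∑ q ∈ Q, z j s q‖ ^ 4 = (‖∑ s ∈ S, ∑ q ∈ Q, z j s q‖ ^ 2) ^ 2 := by ring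
      _ ≤ (#S * ∑ s ∈ S, ‖∑ q ∈ Q, z j s q‖ ^ 2) ^ 2 := by
          gcongr
          exact (pow_le_pow_left₀ (norm_nonneg _) (norm_sum_le _ _) 2).trans
            sq_sum_le_card_mul_sum_sq
      _ ≤ (#S * ∑ q ∈ Q, ∑ q' ∈ Q, ‖∑ s ∈ S, z j s q * conj (z j s q')‖) ^ 2 := by
          gcongr; exact sum_norm_sum_sq_le S Q (z j)
      _ ≤ #S ^ 2 * (#(Q ×ˢ Q) * ∑ p ∈ Q ×ˢ Q, ‖∑ s ∈ S, z j s p.1 * conj (z j s p.2)‖ ^ 2) := by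
          rw [mul_pow, ← sum_product']
          gcongr
          exact sq_sum_le_card_mul_sum_sq
      _ = _ := by rw [sum_product, card_product]; push_cast; ring
  refine (sum_le_sum fun j _ ↦ cauchySchwarz j).trans ?_
  rw [← mul_sum, sum_comm]
  gcongr with q _
  rw [sum_comm]
  gcongr with q' _
  exact sum_norm_sum_sq_le J S fun j s ↦ z j s q * conj (z j s q')

theorem sum_sum_ite_eq {α R : Type*} [DecidableEq α] [NonAssocSemiring R] (T : Finset α) (y : R) :
    ∑ x ∈ T, ∑ x' ∈ T, (if x = x' then y else 0) = #T * y := by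
  rw [sum_congr rfl fun x hx ↦ by rw [sum_ite_eq, if_pos hx], sum_const, nsmul_eq_mul]

theorem sum_box_le {F : τ → τ → σ → σ → ℝ} {D E : ℝ}
    (hD : 0 ≤ D) (hE : 0 ≤ E) (bound : ∀ q q' s s', F q q' s s' ≤ D)
    (offDiag : ∀ q ∈ Q, ∀ q' ∈ Q, ∀ s ∈ S, ∀ s' ∈ S, q ≠ q' → s ≠ s' → F q q' s s' ≤ E) :
    ∑ q ∈ Q, ∑ q' ∈ Q, ∑ s ∈ S, ∑ s' ∈ S, F q q' s s' ≤
      (#Q * #S ^ 2 + #Q ^ 2 * #S) * D + (#Q * #S) ^ 2 * E := by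
  classical
  have termwise (q) (hq : q ∈ Q) (q') (hq' : q' ∈ Q) (s) (hs : s ∈ S) (s') (hs' : s' ∈ S) :
      F q q' s s' ≤ (if q = q' then D else 0) + (if s = s' then D else 0) + E := by
    split_ifs with h₁ h₂ h₂
    · linarith [bound q q' s s']
    · linarith [bound q q' s s']
    · linarith [bound q q' s s']
    · linarith [offDiag q hq q' hq' s hs s' hs' h₁ h₂]
  refine (sum_le_sum fun q hq ↦ sum_le_sum fun q' hq' ↦ sum_le_sum fun s hs ↦
    sum_le_sum fun s' hs' ↦ termwise q hq q' hq' s hs s' hs').trans_eq ?_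
  simp only [sum_add_distrib, sum_const, nsmul_eq_mul, sum_sum_ite_eq]
  simp only [← mul_sum, sum_sum_ite_eq]
  ring

theorem norm_boxCorrelation_le_of_ne [LinearOrder σ] [LinearOrder τ] {z : ι → σ → τ → ℂ} {E : ℝ}
    (hcorr : ∀ s ∈ S, ∀ s' ∈ S, ∀ q ∈ Q, ∀ q' ∈ Q, s < s' → q' < q →
      ‖boxCorrelation J z s s' q q'‖ ≤ E) {s s' : σ} {q q' : τ} (hs : s ∈ S) (hs' : s' ∈ S)
    (hq : q ∈ Q) (hq' : q' ∈ Q) (hss' : s ≠ s') (hqq' : q ≠ q') :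
    ‖boxCorrelation J z s s' q q'‖ ≤ E := by
  have conj_le {s s' : σ} {q q' : τ} (h : ‖boxCorrelation J z s' s q q'‖ ≤ E) :
      ‖boxCorrelation J z s s' q q'‖ ≤ E := by
    rwa [← conj_boxCorrelation, RCLike.norm_conj]
  rcases hss'.lt_or_gt with hs₁ | hs₁ <;> rcases hqq'.lt_or_gt with hq₁ | hq₁
  · rw [← boxCorrelation_swap_swap]
    exact conj_le (hcorr s hs s' hs' q' hq' q hq hs₁ hq₁)
  · exact hcorr s hs s' hs' q hq q' hq' hs₁ hq₁
  · rw [← boxCorrelation_swap_swap]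
    exact hcorr s' hs' s hs q' hq' q hq hs₁ hq₁
  · exact conj_le (hcorr s' hs' s hs q hq q' hq' hs₁ hq₁)

theorem sum_norm_sum_sum_sum_pow_four_le (I : Finset κ) (z : κ → ι → σ → τ → ℂ) :
    (∑ j ∈ J, ‖∑ i ∈ I, ∑ s ∈ S, ∑ q ∈ Q, z i j s q‖) ^ 4 ≤
      ((#J : ℝ) * #I) ^ 3 * ∑ i ∈ I, ((#S : ℝ) * #Q) ^ 2 *
        ∑ q ∈ Q, ∑ q' ∈ Q, ∑ s ∈ S, ∑ s' ∈ S, ‖boxCorrelation J (z i) s s' q q'‖ := by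
  calc (∑ j ∈ J, ‖∑ i ∈ I, ∑ s ∈ S, ∑ q ∈ Q, z i j s q‖) ^ 4
      ≤ (∑ p ∈ J ×ˢ I, ‖∑ s ∈ S, ∑ q ∈ Q, z p.2 p.1 s q‖) ^ 4 := by
        rw [sum_product]
        gcongr
        exact norm_sum_le _ _
    _ ≤ (#(J ×ˢ I) : ℝ) ^ 3 * ∑ p ∈ J ×ˢ I, ‖∑ s ∈ S, ∑ q ∈ Q, z p.2 p.1 s q‖ ^ 4 :=
        pow_sum_le_card_mul_sum_pow (fun _ _ ↦ norm_nonneg _) 3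
    _ ≤ _ := by
        rw [card_product, Nat.cast_mul, sum_product_right]
        gcongr with i
        exact sum_norm_sum_sum_pow_four_le _

theorem sum_norm_sum_box_pow_four_le [LinearOrder σ] [LinearOrder τ] (I : Finset κ)
    {z : κ → ι → σ → τ → ℂ} {B E L : ℝ} (hE : 0 ≤ E) (hL : #J ≤ L) (hS : S.Nonempty)
    (hQ : Q.Nonempty) (hz : ∀ i j s q, ‖z i j s q‖ ≤ B)
    (hcorr : ∀ i ∈ I, ∀ s ∈ S, ∀ s' ∈ S, ∀ q ∈ Q, ∀ q' ∈ Q, s < s' → q' < q →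
      ‖boxCorrelation J (z i) s s' q q'‖ ≤ B ^ 4 * E) :
    (∑ j ∈ J, ‖∑ i ∈ I, ∑ s ∈ S, ∑ q ∈ Q, z i j s q‖) ^ 4 ≤
      (B * (#I * (#S * #Q))) ^ 4 * L ^ 3 * (L * (1 / #S + 1 / #Q) + E) := by
  have hS₀ : (#S : ℝ) ≠ 0 := by exact_mod_cast hS.card_pos.ne'
  have hQ₀ : (#Q : ℝ) ≠ 0 := by exact_mod_cast hQ.card_pos.ne'
  have hL₀ : 0 ≤ L := (Nat.cast_nonneg _).trans hL
  have box (i) (hi : i ∈ I) :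
      ∑ q ∈ Q, ∑ q' ∈ Q, ∑ s ∈ S, ∑ s' ∈ S, ‖boxCorrelation J (z i) s s' q q'‖ ≤
        (#Q * #S ^ 2 + #Q ^ 2 * #S) * (L * B ^ 4) + (#Q * #S) ^ 2 * (B ^ 4 * E) :=
    sum_box_le (by positivity) (by positivity)
      (fun q q' s s' ↦ (norm_boxCorrelation_le_card (hz i) s s' q q').trans (by gcongr))
      fun q hq q' hq' s hs s' hs' hqq' hss' ↦
        norm_boxCorrelation_le_of_ne (hcorr i hi) hs hs' hq hq' hss' hqq'
  calc (∑ j ∈ J, ‖∑ i ∈ I, ∑ s ∈ S, ∑ q ∈ Q, z i j s q‖) ^ 4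
      ≤ (L * #I) ^ 3 * ∑ i ∈ I, ((#S : ℝ) * #Q) ^ 2 *
          ((#Q * #S ^ 2 + #Q ^ 2 * #S) * (L * B ^ 4) + (#Q * #S) ^ 2 * (B ^ 4 * E)) := by
        refine (sum_norm_sum_sum_sum_pow_four_le I z).trans ?_
        gcongr with i hi
        exact box i hi
    _ = _ := by
        rw [sum_const, nsmul_eq_mul]
        field_simp
        ring

end BoxInequality

section SecondDifferences

/-- The second difference of `f` with steps `a` and `b`, based at `x`. -/
def secondDiff (f : ℝ → ℝ) (a b x : ℝ) : ℝ :=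
  f (x + a + b) - f (x + a) - f (x + b) + f x

theorem exists_secondDiff_rpow_eq (s : ℝ) {x a b : ℝ} (hx : 0 < x) (ha : 0 < a) (hb : 0 < b) :
    ∃ ξ ∈ Set.Icc x (x + a + b),
      secondDiff (fun y ↦ y ^ s) a b x = a * b * (s * (s - 1)) * ξ ^ (s - 2) := by
  have deriv (p : ℝ) {y : ℝ} (hy : 0 < y) : HasDerivAt (fun y : ℝ ↦ y ^ p) (p * y ^ (p - 1)) y :=
    Real.hasDerivAt_rpow_const (Or.inl hy.ne')
  have derivDiff {y : ℝ} (hy : 0 < y) : HasDerivAt (fun y : ℝ ↦ (y + b) ^ s - y ^ s)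
      (s * (y + b) ^ (s - 1) - s * y ^ (s - 1)) y :=
    ((deriv s (add_pos hy hb)).comp_add_const y b).sub (deriv s hy)
  obtain ⟨η, ⟨hxη, hηa⟩, hη⟩ := exists_hasDerivAt_eq_slope _ _ (lt_add_of_pos_right x ha)
    (fun y hy ↦ (derivDiff (hx.trans_le hy.1)).continuousAt.continuousWithinAt)
    (fun y hy ↦ derivDiff (hx.trans hy.1))
  have hη₀ : 0 < η := hx.trans hxη
  obtain ⟨ξ, ⟨hηξ, hξb⟩, hξ⟩ := exists_hasDerivAt_eq_slope _ _ (lt_add_of_pos_right η hb)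
    (fun y hy ↦ (deriv (s - 1) (hη₀.trans_le hy.1)).continuousAt.continuousWithinAt)
    (fun y hy ↦ deriv (s - 1) (hη₀.trans hy.1))
  refine ⟨ξ, ⟨by linarith, by linarith⟩, ?_⟩
  rw [eq_div_iff (by linarith)] at hη hξ
  rw [show s - 1 - 1 = s - 2 by ring] at hξ
  simp only [secondDiff]
  linear_combination -hη - a * s * hξ

/-- The second differences of `Φ` inside `[N, 2N]` lie between `μ` and `A μ` times the product of
the steps; this is the form in which `Φ'' ≍ μ` is used. -/
def HasSecondDiffBounds (Φ : ℝ → ℝ) (N μ A : ℝ) : Prop :=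
  ∀ ⦃x a b : ℝ⦄, 0 < a → 0 < b → N ≤ x → x + a + b ≤ 2 * N →
    secondDiff Φ a b x ∈ Set.Icc (μ * (a * b)) (A * μ * (a * b))

/-- The mixed second differences of `(u, v) ↦ Φ (u v)` inside `[N, 2N]` are negative, of absolute
value between `μ` and `A μ` times the product of the steps; this is the form in which
`-∂²ᵤ ∂²ᵥ Φ (u v) ≍ μ` is used. -/
def HasMixedDiffBounds (Φ : ℝ → ℝ) (N μ A : ℝ) : Prop :=
  ∀ ⦃u v a b a' b' : ℝ⦄, 0 < u → 0 < v → 0 < a → 0 < b → 0 < a' → 0 < b' →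
    N ≤ u * v → (u + a' + b') * (v + a + b) ≤ 2 * N →
      -secondDiff (fun u ↦ secondDiff (fun v ↦ Φ (u * v)) a b v) a' b' u ∈
        Set.Icc (μ * (a * b * (a' * b'))) (A * μ * (a * b * (a' * b')))

end SecondDifferences

section Phase

/-- The phase `t x ^ c - h x ^ γ` of the exponential sums. -/
noncomputable def phase (t c h γ : ℝ) (x : ℝ) : ℝ :=
  t * x ^ c - h * x ^ γ

variable {t c h γ κ N : ℝ}

theorem mul_rpow_sub_two_add_mem {y ξ : ℝ} (hN : 0 < N) (hκ : 0 ≤ κ) (hh : 0 ≤ h) (hγ₀ : 0 ≤ γ)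
    (hγ₁ : γ ≤ 1) (hξ : ξ ∈ Set.Icc N (2 * N)) (hy : |y| ≤ κ * h * N ^ (γ - 2) / 8) :
    κ * h * ξ ^ (γ - 2) + y ∈
      Set.Icc (κ * h * N ^ (γ - 2) / 8) (9 * (κ * h * N ^ (γ - 2) / 8)) := by
  have upper : ξ ^ (γ - 2) ≤ N ^ (γ - 2) :=
    Real.rpow_le_rpow_of_nonpos hN hξ.1 (by linarith)
  have lower : N ^ (γ - 2) / 4 ≤ ξ ^ (γ - 2) :=
    calc N ^ (γ - 2) / 4 = 2 ^ (-2 : ℝ) * N ^ (γ - 2) := by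
          rw [Real.rpow_neg (by norm_num), Real.rpow_two]; ring
      _ ≤ 2 ^ (γ - 2) * N ^ (γ - 2) := by
          gcongr
          · norm_num
          · linarith
      _ = (2 * N) ^ (γ - 2) := (Real.mul_rpow (by norm_num) hN.le).symm
      _ ≤ ξ ^ (γ - 2) := Real.rpow_le_rpow_of_nonpos (hN.trans_le hξ.1) hξ.2 (by linarith)
  have hκh : 0 ≤ κ * h := mul_nonneg hκ hh
  have := abs_le.1 hy
  constructor <;>
    linarith [mul_le_mul_of_nonneg_left upper hκh, mul_le_mul_of_nonneg_left lower hκh]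

theorem hasSecondDiffBounds_phase (hN : 0 < N) (hh : 0 ≤ h) (hγ₀ : 0 ≤ γ) (hγ₁ : γ ≤ 1)
    (ht : ∀ η ∈ Set.Icc N (2 * N),
      |t * (c * (c - 1)) * η ^ (c - 2)| ≤ γ * (1 - γ) * h * N ^ (γ - 2) / 8) :
    HasSecondDiffBounds (phase t c h γ) N (γ * (1 - γ) * h * N ^ (γ - 2) / 8) 9 := by
  intro x a b ha hb hNx hx2N
  have hx := hN.trans_le hNx
  obtain ⟨η, hη, hηc⟩ := exists_secondDiff_rpow_eq c hx ha hb
  obtain ⟨ξ, hξ, hξγ⟩ := exists_secondDiff_rpow_eq γ hx ha hb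
  have hsub : Set.Icc x (x + a + b) ⊆ Set.Icc N (2 * N) := Set.Icc_subset_Icc hNx hx2N
  have formula : secondDiff (phase t c h γ) a b x =
      (γ * (1 - γ) * h * ξ ^ (γ - 2) + t * (c * (c - 1)) * η ^ (c - 2)) * (a * b) := by
    simp only [secondDiff, phase] at *
    linear_combination t * hηc - h * hξγ
  obtain ⟨lower, upper⟩ := mul_rpow_sub_two_add_mem hN (mul_nonneg hγ₀ (sub_nonneg.2 hγ₁)) hh hγ₀
    hγ₁ (hsub hξ) (ht η (hsub hη))
  rw [formula]
  exact ⟨by gcongr, by gcongr⟩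

theorem hasMixedDiffBounds_phase (hN : 0 < N) (hh : 0 ≤ h) (hγ₀ : 0 ≤ γ) (hγ₁ : γ ≤ 1)
    (ht : ∀ η ∈ Set.Icc N (2 * N),
      |t * (c * (c - 1)) ^ 2 * η ^ (c - 2)| ≤ (γ * (1 - γ)) ^ 2 * h * N ^ (γ - 2) / 8) :
    HasMixedDiffBounds (phase t c h γ) N ((γ * (1 - γ)) ^ 2 * h * N ^ (γ - 2) / 8) 9 := by
  intro u v a b a' b' hu hv ha hb ha' hb' hNuv huv2N
  obtain ⟨η, hη, hηc⟩ := exists_secondDiff_rpow_eq c hu ha' hb'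
  obtain ⟨ξ, hξ, hξγ⟩ := exists_secondDiff_rpow_eq γ hu ha' hb'
  obtain ⟨η', hη', hηc'⟩ := exists_secondDiff_rpow_eq c hv ha hb
  obtain ⟨ξ', hξ', hξγ'⟩ := exists_secondDiff_rpow_eq γ hv ha hb
  have mul_mem {y y' : ℝ} (hy : y ∈ Set.Icc u (u + a' + b')) (hy' : y' ∈ Set.Icc v (v + a + b)) :
      y * y' ∈ Set.Icc N (2 * N) :=
    have hy₀ := hu.trans_le hy.1
    ⟨hNuv.trans (mul_le_mul hy.1 hy'.1 hv.le hy₀.le),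
      (mul_le_mul hy.2 hy'.2 (hv.trans_le hy'.1).le (by linarith)).trans huv2N⟩
  have formula : -secondDiff (fun u ↦ secondDiff (fun v ↦ phase t c h γ (u * v)) a b v) a' b' u =
      ((γ * (1 - γ)) ^ 2 * h * (ξ * ξ') ^ (γ - 2) + -(t * (c * (c - 1)) ^ 2 * (η * η') ^ (c - 2))) *
        (a * b * (a' * b')) := by
    have factor : secondDiff (fun u ↦ secondDiff (fun v ↦ phase t c h γ (u * v)) a b v) a' b' u =
        t * (secondDiff (fun y ↦ y ^ c) a' b' u * secondDiff (fun y ↦ y ^ c) a b v) -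
          h * (secondDiff (fun y ↦ y ^ γ) a' b' u * secondDiff (fun y ↦ y ^ γ) a b v) := by
      have split {y w : ℝ} (hy : 0 < y) (hw : 0 < w) (s : ℝ) : (y * w) ^ s = y ^ s * w ^ s :=
        Real.mul_rpow hy.le hw.le
      simp only [secondDiff, phase]
      simp (discharger := positivity) only [split]
      ring
    rw [factor, hηc, hηc', hξγ, hξγ', Real.mul_rpow (hu.trans_le hξ.1).le (hv.trans_le hξ'.1).le,
      Real.mul_rpow (hu.trans_le hη.1).le (hv.trans_le hη'.1).le]
    ring
  obtain ⟨lower, upper⟩ := mul_rpow_sub_two_add_mem hN (sq_nonneg (γ * (1 - γ))) hh hγ₀ hγ₁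
    (mul_mem hξ hξ') (by rw [abs_neg]; exact ht _ (mul_mem hη hη'))
  rw [formula]
  exact ⟨by gcongr, by gcongr⟩

end Phase

section LocalTerms

/-- The summand `b l * e (Φ (m l))`, restricted to `N < m l ≤ 2 N`. -/
noncomputable def localTerm (Φ : ℝ → ℝ) (N : ℝ) (b : ℕ → ℝ) (m l : ℕ) : ℂ :=
  (Set.Ioc N (2 * N)).indicator (fun y ↦ (b l : ℂ) * e (Φ y)) (m * l)

variable {Φ : ℝ → ℝ} {N μ A B : ℝ} {b : ℕ → ℝ}

theorem norm_localTerm_le (hb : ∀ l, |b l| ≤ B) (m l : ℕ) : ‖localTerm Φ N b m l‖ ≤ B := by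
  refine (norm_indicator_le_norm_self _ _).trans ?_
  simpa using hb l

theorem localTerm_eq_zero {m l : ℕ} (h : (m * l : ℝ) ∉ Set.Ioc N (2 * N)) :
    localTerm Φ N b m l = 0 :=
  Set.indicator_of_notMem h _

theorem localTerm_of_mem {m l : ℕ} (h : (m * l : ℝ) ∈ Set.Ioc N (2 * N)) :
    localTerm Φ N b m l = b l * e (Φ (m * l)) :=
  Set.indicator_of_mem h _

open scoped Classical in
theorem ordConnected_filter_mul_mem_Ioc {S : Finset ℕ} (hS : (S : Set ℕ).OrdConnected)
    (m ρ d : ℕ) :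
    (({k ∈ S | (m * (ρ + d * k : ℕ) : ℝ) ∈ Set.Ioc N (2 * N)} : Finset ℕ) :
      Set ℕ).OrdConnected := by
  refine ordConnected_filter_of_monotoneOn hS (g := fun k ↦ m * (ρ + d * k : ℕ)) ?_
    (p := (· ∈ Set.Ioc N (2 * N))) Set.ordConnected_Ioc
  intro k _ n _ hkn
  dsimp only
  gcongr

theorem norm_sum_e_progression_le {S : Finset ℕ} (hS : (S : Set ℕ).OrdConnected) (hN : 0 ≤ N)
    (hμ : 0 < μ) (hA : 1 ≤ A) (hΦ : HasSecondDiffBounds Φ N μ A) {m d ρ : ℕ} (hm : 0 < m)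
    (hd : 0 < d) (hmem : ∀ k ∈ S, (m * (ρ + d * k : ℕ) : ℝ) ∈ Set.Ioc N (2 * N)) :
    ‖∑ k ∈ S, e (Φ (m * (ρ + d * k : ℕ)))‖ ≤
      6 * A * ((N + m * d) * √μ) + 11 / (m * d * √μ) := by
  have hy : 0 < (m * d : ℝ) := by positivity
  have card : (#S : ℝ) ≤ N / (m * d) + 1 := by
    refine card_le_of_forall_natCast_sub_le (by positivity) fun j hj k hk ↦ ?_
    rw [le_div_iff₀ hy]
    have := (hmem j hj).1
    have := (hmem k hk).2
    push_cast at *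
    linarith
  have vdC := norm_sum_e_le_of_increment_sub_mem (x := fun k ↦ Φ (m * (ρ + d * k : ℕ))) hS
    (μ := μ * (m * d) ^ 2) (by positivity) hA fun j hj k hk hjk ↦ ?_
  · have sqrt_eq : √(μ * (m * d) ^ 2) = √μ * (m * d) := by
      rw [Real.sqrt_mul hμ.le, Real.sqrt_sq hy.le]
    rw [sqrt_eq] at vdC
    calc _ ≤ _ := vdC
      _ ≤ 6 * A * ((N / (m * d) + 1) * (√μ * (m * d))) + 11 / (√μ * (m * d)) := by gcongr
      _ = _ := by field_simp
  · have hjk' : (0 : ℝ) < k - j := by simpa using hjk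
    have := hΦ (x := m * (ρ + d * j : ℕ)) (a := m * d * (k - j)) (b := m * d) (by positivity) hy
      (hmem j hj).1.le ((hmem _ hk).2.trans_eq' (by push_cast; ring))
    convert this using 1
    · congr 1 <;> ring
    · simp only [increment, secondDiff]
      push_cast
      ring_nf

theorem norm_sum_localTerm_progression_le (hN : 0 ≤ N) (hμ : 0 < μ) (hA : 1 ≤ A)
    (hΦ : HasSecondDiffBounds Φ N μ A) (hb : Monotone b) (hb₀ : ∀ l, 0 ≤ b l) (hbB : ∀ l, b l ≤ B)
    {m d : ℕ} (hm : 0 < m) (hd : 0 < d) (ρ K : ℕ) :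
    ‖∑ k ∈ range K, localTerm Φ N b m (ρ + d * k)‖ ≤
      B * (6 * A * ((N + m * d) * √μ) + 11 / (m * d * √μ)) := by
  classical
  have expand : ∑ k ∈ range K, localTerm Φ N b m (ρ + d * k) =
      ∑ k ∈ range K with (m * (ρ + d * k : ℕ) : ℝ) ∈ Set.Ioc N (2 * N),
        b (ρ + d * k) • e (Φ (m * (ρ + d * k : ℕ))) := by
    simp only [localTerm, Set.indicator_apply, sum_filter, Complex.real_smul]
  have ordConn := ordConnected_filter_mul_mem_Ioc (N := N) (S := range K)
    (by simpa using Set.ordConnected_Iio) m ρ d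
  rw [expand]
  refine norm_sum_smul_le_of_monotoneOn ((hb₀ 0).trans (hbB 0)) (by positivity)
    (fun j _ k _ hjk ↦ hb (by gcongr)) (fun _ _ ↦ hb₀ _) (fun _ _ ↦ hbB _) fun j _ ↦ ?_
  refine norm_sum_e_progression_le ?_ hN hμ hA hΦ hm hd
    fun k hk ↦ (mem_filter.1 (mem_filter.1 hk).1).2
  rw [coe_filter]
  exact ordConn.inter Set.ordConnected_Ici

theorem norm_sum_e_secondDiff_le {S : Finset ℕ} (hS : (S : Set ℕ).OrdConnected) (hN : 0 < N)
    (hμ : 0 < μ) (hA : 1 ≤ A) (hΦ : HasMixedDiffBounds Φ N μ A) {r d l α β : ℕ} (hd : 0 < d)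
    (hα : 0 < α) (hβ : 0 < β)
    (hmem : ∀ j ∈ S, N ≤ (r + d * j : ℕ) * l ∧ ((r + d * j : ℕ) * (l + α + β) : ℝ) ≤ 2 * N) :
    ‖∑ j ∈ S, e (-secondDiff (fun v ↦ Φ ((r + d * j : ℕ) * v)) α β l)‖ ≤
      6 * A * (#S * √(μ * (d ^ 2 * (α * β)))) + 11 / √(μ * (d ^ 2 * (α * β))) := by
  refine norm_sum_e_le_of_increment_sub_mem hS (by positivity) hA fun j hj k hk hjk ↦ ?_
  have hjk' : (0 : ℝ) < k - j := by simpa using hjk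
  have hpos : (0 : ℝ) < (r + d * j : ℕ) * l := hN.trans_le (hmem j hj).1
  have := hΦ (u := (r + d * j : ℕ)) (v := l) (a := α) (b := β) (a' := d * (k - j)) (b' := d)
    (pos_of_mul_pos_left hpos (by positivity)) (pos_of_mul_pos_right hpos (by positivity))
    (by positivity) (by positivity) (by positivity) (by positivity) (hmem j hj).1
    ((hmem _ hk).2.trans_eq' (by push_cast; ring))
  convert this using 1
  · congr 1 <;> ring
  · simp only [increment, secondDiff]
    push_cast
    ring_nf

end LocalTerms

section BoxCorrelations

variable {Φ : ℝ → ℝ} {N μ A B : ℝ} {b : ℕ → ℝ}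

open scoped Classical in
theorem localTerm_mul_conj_box (Φ : ℝ → ℝ) (N : ℝ) (b : ℕ → ℝ) (m l α β : ℕ) :
    localTerm Φ N b m (l + β) * conj (localTerm Φ N b m l) *
        conj (localTerm Φ N b m (l + α + β) * conj (localTerm Φ N b m (l + α))) =
      if N < m * l ∧ (m * (l + α + β) : ℝ) ≤ 2 * N then
        (b (l + β) * b l * (b (l + α + β) * b (l + α)) : ℝ) *
          e (-secondDiff (fun v ↦ Φ (m * v)) α β l) else 0 := by
  split_ifs with h
  · have mem {k : ℕ} (hlk : l ≤ k) (hk : k ≤ l + α + β) : (m * k : ℝ) ∈ Set.Ioc N (2 * N) := by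
      refine ⟨h.1.trans_le (by gcongr), le_trans ?_ h.2⟩
      have : (k : ℝ) ≤ l + α + β := by exact_mod_cast hk
      gcongr
    have exponent : -secondDiff (fun v ↦ Φ (m * v)) α β l =
        Φ (m * (l + β : ℕ)) + -Φ (m * l) + (-Φ (m * (l + α + β : ℕ)) + Φ (m * (l + α : ℕ))) := by
      simp only [secondDiff]
      push_cast
      ring
    rw [localTerm_of_mem (mem le_rfl (by omega)), localTerm_of_mem (mem (by omega) le_rfl),
      localTerm_of_mem (mem (by omega : l ≤ l + α) (by omega)),
      localTerm_of_mem (mem (by omega : l ≤ l + β) (by omega)), exponent]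
    simp only [e_add, ← conj_e, map_mul, Complex.conj_conj, Complex.conj_ofReal]
    push_cast
    ring
  · by_cases hl : N < m * l
    · have : (m * (l + α + β : ℕ) : ℝ) ∉ Set.Ioc N (2 * N) := fun hmem ↦
        h ⟨hl, by exact_mod_cast hmem.2⟩
      simp [localTerm_eq_zero this]
    · have : (m * l : ℝ) ∉ Set.Ioc N (2 * N) := fun hmem ↦ hl hmem.1
      simp [localTerm_eq_zero this]

theorem norm_sum_localTerm_mul_conj_box_le {J : Finset ℕ} (hJ : (J : Set ℕ).OrdConnected)
    (hN : 0 < N) (hμ : 0 < μ) (hA : 1 ≤ A) (hΦ : HasMixedDiffBounds Φ N μ A)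
    (hb : ∀ l, |b l| ≤ B) (r l : ℕ) {d α β : ℕ} (hd : 0 < d) (hα : 0 < α) (hβ : 0 < β) :
    ‖∑ j ∈ J, localTerm Φ N b (r + d * j) (l + β) * conj (localTerm Φ N b (r + d * j) l) *
        conj (localTerm Φ N b (r + d * j) (l + α + β) *
          conj (localTerm Φ N b (r + d * j) (l + α)))‖ ≤
      B ^ 4 * (6 * A * (#J * √(μ * (d ^ 2 * (α * β)))) + 11 / √(μ * (d ^ 2 * (α * β)))) := by
  classical
  set S := {j ∈ J | N < (r + d * j : ℕ) * l ∧ ((r + d * j : ℕ) * (l + α + β) : ℝ) ≤ 2 * N}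
    with hS
  have hSJ : S ⊆ J := filter_subset _ _
  have ordConn : (S : Set ℕ).OrdConnected := by
    have mono (y : ℝ) (hy : 0 ≤ y) : Monotone fun j : ℕ ↦ ((r + d * j : ℕ) * y : ℝ) := by
      intro j k hjk
      dsimp only
      gcongr
    rw [hS, coe_filter]
    exact hJ.inter ((Set.ordConnected_Ioi.preimage_mono (mono l (by positivity))).inter
      (Set.ordConnected_Iic.preimage_mono (mono (l + α + β) (by positivity))))
  have vdC := norm_sum_e_secondDiff_le (r := r) (l := l) ordConn hN hμ hA hΦ hd hα hβ
    fun j hj ↦ (mem_filter.1 hj).2.imp_left le_of_lt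
  simp only [localTerm_mul_conj_box, ← sum_filter, ← hS, ← mul_sum]
  rw [norm_mul, Complex.norm_real, norm_mul, norm_mul, norm_mul]
  calc _ ≤ B * B * (B * B) * (6 * A * (#S * √(μ * (d ^ 2 * (α * β)))) +
        11 / √(μ * (d ^ 2 * (α * β)))) := by
        have := (abs_nonneg _).trans (hb 0)
        gcongr <;> apply hb
    _ ≤ _ := by
        rw [show B * B * (B * B) = B ^ 4 by ring]
        gcongr

theorem norm_boxCorrelation_localTerm_le {J : Finset ℕ} (hJ : (J : Set ℕ).OrdConnected)
    (hN : 0 < N) (hμ : 0 < μ) (hA : 1 ≤ A) (hΦ : HasMixedDiffBounds Φ N μ A)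
    (hb : ∀ l, |b l| ≤ B) {d : ℕ} (hd : 0 < d) (r ρ i : ℕ) {Q₁ Q₂ s s' q q' : ℕ}
    (hs' : s' < Q₂) (hq : q < Q₁) (hss' : s < s') (hqq' : q' < q) :
    ‖boxCorrelation J
        (fun j s q ↦ localTerm Φ N b (r + d * j) (ρ + d * (q + Q₁ * (s + Q₂ * i)))) s s' q q'‖ ≤
      B ^ 4 * (6 * A * (#J * √(μ * (d ^ 4 * (Q₁ ^ 2 * Q₂)))) + 11 / √(μ * (d ^ 4 * Q₁))) := by
  obtain ⟨x, rfl⟩ := Nat.exists_eq_add_of_lt hss'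
  obtain ⟨y, rfl⟩ := Nat.exists_eq_add_of_lt hqq'
  have hQ₁ : 0 < Q₁ := by omega
  have bound := norm_sum_localTerm_mul_conj_box_le hJ hN hμ hA hΦ hb r
    (ρ + d * (q' + Q₁ * (s + Q₂ * i))) (α := d * Q₁ * (x + 1)) (β := d * (y + 1)) hd
    (by positivity) (by positivity)
  have param : (d ^ 2 * ((d * Q₁ * (x + 1) : ℕ) * (d * (y + 1) : ℕ)) : ℝ) =
      d ^ 4 * (Q₁ * ((x + 1) * (y + 1))) := by
    push_cast
    ring
  have hx : (x + 1 : ℝ) ≤ Q₂ := by exact_mod_cast (by omega : x + 1 ≤ Q₂)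
  have hy : (y + 1 : ℝ) ≤ Q₁ := by exact_mod_cast (by omega : y + 1 ≤ Q₁)
  have upper : (Q₁ * ((x + 1) * (y + 1)) : ℝ) ≤ Q₁ ^ 2 * Q₂ :=
    calc (Q₁ * ((x + 1) * (y + 1)) : ℝ) ≤ Q₁ * (Q₂ * Q₁) := by gcongr
      _ = Q₁ ^ 2 * Q₂ := by ring
  have lower : (Q₁ : ℝ) ≤ Q₁ * ((x + 1) * (y + 1)) :=
    le_mul_of_one_le_right (by positivity)
      (one_le_mul_of_one_le_of_one_le (by linarith [x.cast_nonneg (α := ℝ)])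
        (by linarith [y.cast_nonneg (α := ℝ)]))
  rw [param] at bound
  calc _ = _ := by
        simp only [boxCorrelation]
        ring_nf
    _ ≤ _ := bound
    _ ≤ _ := by gcongr

theorem sum_range_mul_eq_sum_sum {α : Type*} [AddCommMonoid α] (f : ℕ → α) (Q n : ℕ) :
    ∑ k ∈ range (Q * n), f k = ∑ i ∈ range n, ∑ q ∈ range Q, f (q + Q * i) := by
  induction n with
  | zero => simp
  | succ n ih =>
    rw [Nat.mul_succ, sum_range_add, ih, sum_range_succ]
    simp only [add_comm (Q * n)]

theorem sum_norm_sum_localTerm_pow_four_le {J : Finset ℕ} (hJ : (J : Set ℕ).OrdConnected)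
    (hN : 0 < N) (hμ : 0 < μ) (hA : 1 ≤ A) (hΦ : HasMixedDiffBounds Φ N μ A)
    (hb : ∀ l, |b l| ≤ B) {d : ℕ} (hd : 0 < d) (r ρ I : ℕ) {Q₁ Q₂ : ℕ} (hQ₁ : 0 < Q₁)
    (hQ₂ : 0 < Q₂) {L : ℝ} (hL₀ : 0 < L) (hL : #J ≤ L) :
    (∑ j ∈ J, ‖∑ k ∈ range (Q₁ * (Q₂ * I)), localTerm Φ N b (r + d * j) (ρ + d * k)‖) ^ 4 ≤
      (B * (L * (Q₁ * (Q₂ * I)))) ^ 4 * (1 / Q₁ + 1 / Q₂ +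
        6 * A * √(μ * (d ^ 4 * (Q₁ ^ 2 * Q₂))) + 11 / (L * √(μ * (d ^ 4 * Q₁)))) := by
  have box := sum_norm_sum_box_pow_four_le (J := J) (S := range Q₂) (Q := range Q₁) (range I)
    (z := fun i j s q ↦ localTerm Φ N b (r + d * j) (ρ + d * (q + Q₁ * (s + Q₂ * i)))) (B := B)
    (E := 6 * A * (L * √(μ * (d ^ 4 * (Q₁ ^ 2 * Q₂)))) + 11 / √(μ * (d ^ 4 * Q₁)))
    (by positivity) hL (nonempty_range_iff.2 hQ₂.ne') (nonempty_range_iff.2 hQ₁.ne')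
    (fun _ _ _ _ ↦ norm_localTerm_le hb _ _) fun i _ s _ s' hs' q hq q' _ hss' hqq' ↦ by
      refine (norm_boxCorrelation_localTerm_le hJ hN hμ hA hΦ hb hd r ρ i (mem_range.1 hs')
        (mem_range.1 hq) hss' hqq').trans ?_
      gcongr
  simp only [sum_range_mul_eq_sum_sum]
  refine box.trans_eq ?_
  simp only [card_range]
  field_simp
  ring

end BoxCorrelations

section Residues

/-- The residues `ρ` modulo `d` with `r ρ ≡ a`. -/
def residues (d : ℕ) (a : ℤ) (r : ℕ) : Finset ℕ :=
  {ρ ∈ range d | (d : ℤ) ∣ (r * ρ : ℕ) - a}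

theorem card_residues_le_one {d : ℕ} {a : ℤ} (hda : Int.gcd d a = 1) (r : ℕ) :
    #(residues d a r) ≤ 1 := by
  refine card_le_one.2 fun x hx y hy ↦ ?_
  simp only [residues, mem_filter, mem_range, Nat.cast_mul] at hx hy
  have coprime : IsCoprime (d : ℤ) r := by
    obtain ⟨u, v, huv⟩ := Int.isCoprime_iff_gcd_eq_one.2 hda
    obtain ⟨w, hw⟩ := hx.2
    exact ⟨u - v * w, v * x, by linear_combination huv + v * hw⟩
  have dvd_diff : (d : ℤ) ∣ r * (x - y) := by
    have := dvd_sub hx.2 hy.2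
    rwa [sub_sub_sub_cancel_right, ← mul_sub] at this
  have modEq : (x : ℤ) ≡ y [ZMOD d] :=
    (Int.modEq_iff_dvd.2 (coprime.dvd_of_dvd_mul_left dvd_diff)).symm
  exact Nat.ModEq.eq_of_lt_of_lt (Int.natCast_modEq_iff.1 modEq) hx.1 hy.1

theorem sum_residues_le {d : ℕ} {a : ℤ} (hda : Int.gcd d a = 1) (r : ℕ) {g : ℕ → ℝ} {E : ℝ}
    (hE : 0 ≤ E) (hg : ∀ ρ, g ρ ≤ E) : ∑ ρ ∈ residues d a r, g ρ ≤ E := by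
  refine (sum_le_card_nsmul _ _ E fun ρ _ ↦ hg ρ).trans ?_
  rw [nsmul_eq_mul]
  exact mul_le_of_le_one_left hE (by exact_mod_cast card_residues_le_one hda r)

theorem dvd_add_mul_mul_sub_iff (d r k ρ : ℕ) (a : ℤ) :
    (d : ℤ) ∣ ((r + d * k) * ρ : ℕ) - a ↔ (d : ℤ) ∣ (r * ρ : ℕ) - a := by
  have : (((r + d * k) * ρ : ℕ) : ℤ) - a = ((r * ρ : ℕ) - a) + d * (k * ρ) := by
    push_cast
    ring
  rw [this]
  exact dvd_add_left (dvd_mul_right _ _)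

theorem residues_add_mul (d : ℕ) (a : ℤ) (r k : ℕ) :
    residues d a (r + d * k) = residues d a r := by
  simp only [residues, dvd_add_mul_mul_sub_iff]

variable {α : Type*} [AddCommMonoid α]

theorem sum_eq_sum_range_sum_filter {S : Finset ℕ} {d K : ℕ} (hS : S ⊆ range (d * K)) (f : ℕ → α) :
    ∑ m ∈ S, f m = ∑ r ∈ range d, ∑ j ∈ range K with r + d * j ∈ S, f (r + d * j) := by
  rw [← inter_eq_right.2 hS, ← sum_ite_mem, sum_range_mul_eq_sum_sum, sum_comm]
  refine sum_congr rfl fun r _ ↦ ?_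
  rw [← sum_filter, inter_eq_right.2 hS]

theorem sum_filter_dvd_eq_sum_residues (d K m : ℕ) (a : ℤ) (f : ℕ → α) :
    ∑ l ∈ range (d * K) with (d : ℤ) ∣ ((m * l : ℕ) : ℤ) - a, f l =
      ∑ ρ ∈ residues d a m, ∑ k ∈ range K, f (ρ + d * k) := by
  rw [residues, sum_filter, sum_range_mul_eq_sum_sum, sum_comm, sum_filter]
  refine sum_congr rfl fun ρ _ ↦ ?_
  simp only [mul_comm m, dvd_add_mul_mul_sub_iff]
  split_ifs <;> simp

end Residues

section ProgressionSums

/-- The sum over `m ∼ M` of the absolute values of the sums of the local terms over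
`m l ≡ a (mod d)`. -/
noncomputable def progressionSum (Φ : ℝ → ℝ) (N : ℝ) (b : ℕ → ℝ) (M : ℝ) (d : ℕ) (a : ℤ) : ℝ :=
  ∑ m ∈ Ioc ⌊M⌋₊ ⌊2 * M⌋₊,
    ‖∑ l ∈ Icc 1 ⌊2 * N⌋₊ with (d : ℤ) ∣ ((m * l : ℕ) : ℤ) - a, localTerm Φ N b m l‖

variable {Φ : ℝ → ℝ} {N M μ A B E : ℝ} {b : ℕ → ℝ} {d K : ℕ} {a : ℤ}

theorem mem_Ioc_floor_iff (hM : 0 ≤ M) {m : ℕ} :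
    m ∈ Ioc ⌊M⌋₊ ⌊2 * M⌋₊ ↔ (m : ℝ) ∈ Set.Ioc M (2 * M) := by
  rw [mem_Ioc, Nat.floor_lt hM, Nat.le_floor_iff (by positivity), Set.mem_Ioc]

theorem norm_sum_localTerm_le_sum_residues (hN : 0 ≤ N) (hM : 0 ≤ M) (hK : 2 * N < M * (d * K))
    {m : ℕ} (hm : M < m) :
    ‖∑ l ∈ Icc 1 ⌊2 * N⌋₊ with (d : ℤ) ∣ ((m * l : ℕ) : ℤ) - a, localTerm Φ N b m l‖ ≤
      ∑ ρ ∈ residues d a m, ‖∑ k ∈ range K, localTerm Φ N b m (ρ + d * k)‖ := by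
  have hm₁ : (1 : ℝ) ≤ m := by exact_mod_cast Nat.cast_pos.1 (hM.trans_lt hm)
  have support {l : ℕ} (h : localTerm Φ N b m l ≠ 0) :
      l ∈ Icc 1 ⌊2 * N⌋₊ ∧ l ∈ range (d * K) := by
    obtain ⟨hNml, hml⟩ := not_imp_comm.1 localTerm_eq_zero h
    have hl : 0 < l := Nat.pos_of_ne_zero fun hl ↦ by simp [hl] at hNml; linarith
    have hdK : (l : ℝ) < (d * K : ℕ) := by
      push_cast
      refine lt_of_mul_lt_mul_left (hml.trans_lt (hK.trans_le ?_)) (by positivity : (0 : ℝ) ≤ m)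
      gcongr
    exact ⟨mem_Icc.2 ⟨hl, Nat.le_floor ((le_mul_of_one_le_left (by positivity) hm₁).trans hml)⟩,
      mem_range.2 (by exact_mod_cast hdK)⟩
  have extend : ∑ l ∈ Icc 1 ⌊2 * N⌋₊ with (d : ℤ) ∣ ((m * l : ℕ) : ℤ) - a, localTerm Φ N b m l =
      ∑ l ∈ range (d * K) with (d : ℤ) ∣ ((m * l : ℕ) : ℤ) - a, localTerm Φ N b m l := by
    refine sum_congr_of_eq_on_inter (fun l hl hl' ↦ ?_) (fun l hl hl' ↦ ?_) fun _ _ _ ↦ rfl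
    all_goals
      by_contra h
      exact hl' (mem_filter.2 ⟨by simp only [support h], (mem_filter.1 hl).2⟩)
  rw [extend, sum_filter_dvd_eq_sum_residues]
  exact norm_sum_le _ _

theorem progressionSum_le_of_row_le (hda : Int.gcd d a = 1) (hN : 0 ≤ N) (hM : 0 ≤ M)
    (hK : 2 * N < M * (d * K)) (hE : 0 ≤ E) (row : ∀ m : ℕ, (m : ℝ) ∈ Set.Ioc M (2 * M) → ∀ ρ,
      ‖∑ k ∈ range K, localTerm Φ N b m (ρ + d * k)‖ ≤ E) :
    progressionSum Φ N b M d a ≤ 2 * M * E := by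
  refine (sum_le_card_nsmul _ _ E fun m hm ↦ ?_).trans ?_
  · rw [mem_Ioc_floor_iff hM] at hm
    exact (norm_sum_localTerm_le_sum_residues hN hM hK hm.1).trans
      (sum_residues_le hda m hE (row m hm))
  · rw [nsmul_eq_mul, Nat.card_Ioc]
    gcongr
    calc ((⌊2 * M⌋₊ - ⌊M⌋₊ : ℕ) : ℝ) ≤ ⌊2 * M⌋₊ := by exact_mod_cast Nat.sub_le _ _
      _ ≤ 2 * M := Nat.floor_le (by positivity)

theorem progressionSum_le_of_block_le (hda : Int.gcd d a = 1) (hd : 0 < d) (hN : 0 ≤ N)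
    (hM : 0 ≤ M) (hK : 2 * N < M * (d * K)) (hE : 0 ≤ E) (block : ∀ r ρ : ℕ,
      ∑ j ∈ range (⌊2 * M⌋₊ + 1) with r + d * j ∈ Ioc ⌊M⌋₊ ⌊2 * M⌋₊,
        ‖∑ k ∈ range K, localTerm Φ N b (r + d * j) (ρ + d * k)‖ ≤ E) :
    progressionSum Φ N b M d a ≤ d * E := by
  have subset : Ioc ⌊M⌋₊ ⌊2 * M⌋₊ ⊆ range (d * (⌊2 * M⌋₊ + 1)) := fun m hm ↦
    mem_range.2 ((Nat.lt_succ_of_le (mem_Ioc.1 hm).2).trans_le (Nat.le_mul_of_pos_left _ hd))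
  calc progressionSum Φ N b M d a
      ≤ ∑ m ∈ Ioc ⌊M⌋₊ ⌊2 * M⌋₊, ∑ ρ ∈ residues d a m,
          ‖∑ k ∈ range K, localTerm Φ N b m (ρ + d * k)‖ := sum_le_sum fun m hm ↦
        norm_sum_localTerm_le_sum_residues hN hM hK ((mem_Ioc_floor_iff hM).1 hm).1
    _ ≤ ∑ _r ∈ range d, E := by
        rw [sum_eq_sum_range_sum_filter subset]
        refine sum_le_sum fun r _ ↦ ?_
        simp only [residues_add_mul]
        rw [sum_comm]
        exact sum_residues_le hda r hE (block r)
    _ = d * E := by simp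

theorem progressionSum_le_of_hasSecondDiffBounds (hda : Int.gcd d a = 1) (hd : 0 < d) (hN : 0 ≤ N)
    (hM : 0 < M) (hμ : 0 < μ) (hA : 1 ≤ A) (hΦ : HasSecondDiffBounds Φ N μ A) (hb : Monotone b)
    (hb₀ : ∀ l, 0 ≤ b l) (hbB : ∀ l, b l ≤ B) :
    progressionSum Φ N b M d a ≤
      2 * M * (B * (6 * A * ((N + 2 * (M * d)) * √μ) + 11 / (M * d * √μ))) := by
  have hB : 0 ≤ B := (hb₀ 0).trans (hbB 0)
  obtain ⟨K, hK⟩ := exists_nat_gt (2 * N / (M * d))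
  rw [div_lt_iff₀ (by positivity)] at hK
  refine progressionSum_le_of_row_le (K := K) hda hN hM.le (by linarith) (by positivity)
    fun m hm ρ ↦ ?_
  have hm₀ : (0 : ℝ) < m := hM.trans hm.1
  refine (norm_sum_localTerm_progression_le hN hμ hA hΦ hb hb₀ hbB (Nat.cast_pos.1 hm₀) hd
    ρ K).trans ?_
  have := hm.1.le
  have : m * d ≤ 2 * (M * d) := by
    rw [← mul_assoc]
    exact mul_le_mul_of_nonneg_right hm.2 (by positivity)
  gcongr

theorem progressionSum_le_of_hasMixedDiffBounds (hda : Int.gcd d a = 1) (hd : 0 < d) (hN : 0 < N)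
    (hM : 0 < M) (hμ : 0 < μ) (hA : 1 ≤ A) (hΦ : HasMixedDiffBounds Φ N μ A)
    (hb : ∀ l, |b l| ≤ B) {Q₁ Q₂ I : ℕ} (hQ₁ : 0 < Q₁) (hQ₂ : 0 < Q₂)
    (hI : 2 * N < M * (d * (Q₁ * (Q₂ * I)))) {R : ℝ} (hR₀ : 0 ≤ R)
    (hR : 1 / Q₁ + 1 / Q₂ + 6 * A * √(μ * (d ^ 4 * (Q₁ ^ 2 * Q₂))) +
      11 / ((M / d + 1) * √(μ * (d ^ 4 * Q₁))) ≤ R ^ 4) :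
    progressionSum Φ N b M d a ≤ d * (B * ((M / d + 1) * (Q₁ * (Q₂ * I))) * R) := by
  have hB : 0 ≤ B := (abs_nonneg _).trans (hb 0)
  have hE : 0 ≤ B * ((M / d + 1) * (Q₁ * (Q₂ * I))) * R := by positivity
  refine progressionSum_le_of_block_le (K := Q₁ * (Q₂ * I)) hda hd hN.le hM.le
    (by push_cast; exact hI) hE fun r ρ ↦ ?_
  set J := {j ∈ range (⌊2 * M⌋₊ + 1) | r + d * j ∈ Ioc ⌊M⌋₊ ⌊2 * M⌋₊} with hJ
  have ordConn : (J : Set ℕ).OrdConnected := by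
    have mono : Monotone fun j ↦ r + d * j := fun j k hjk ↦ by dsimp only; gcongr
    simp only [hJ, coe_filter, mem_range, mem_Ioc]
    exact Set.ordConnected_Iio.inter (Set.ordConnected_Ioc.preimage_mono mono)
  have card : (#J : ℝ) ≤ M / d + 1 := by
    refine card_le_of_forall_natCast_sub_le (by positivity) fun j hj k hk ↦ ?_
    have hj' := ((mem_Ioc_floor_iff hM.le).1 (mem_filter.1 hj).2).1
    have hk' := ((mem_Ioc_floor_iff hM.le).1 (mem_filter.1 hk).2).2
    rw [le_div_iff₀ (by positivity)]
    push_cast at hj' hk'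
    linarith
  refine le_of_pow_le_pow_left₀ (n := 4) (by norm_num) hE ?_
  refine (sum_norm_sum_localTerm_pow_four_le ordConn hN hμ hA hΦ hb hd r ρ I hQ₁ hQ₂
    (by positivity) card).trans ?_
  rw [mul_pow _ R]
  gcongr

end ProgressionSums

section Exponents

variable {Φ : ℝ → ℝ} {N M μ κ B K δ : ℝ} {b : ℕ → ℝ} {d : ℕ} {a : ℤ}

theorem sqrt_rpow (hN : 0 ≤ N) (x : ℝ) : √(N ^ x) = N ^ (x / 2) := by
  rw [Real.sqrt_eq_rpow, ← Real.rpow_mul hN]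
  ring_nf

theorem rpow_mul_rpow_le (hN : 1 ≤ N) {x y z : ℝ} (h : x + y ≤ z) : N ^ x * N ^ y ≤ N ^ z := by
  rw [← Real.rpow_add (by positivity)]
  exact Real.rpow_le_rpow_of_exponent_le hN h

theorem sqrt_mul_rpow_le_sqrt (hN : 0 ≤ N) (hκ : 0 ≤ κ) (hμ : κ * N ^ (-1 - δ) ≤ μ) :
    √κ * N ^ ((-1 - δ) / 2) ≤ √μ := by
  rw [← sqrt_rpow hN, ← Real.sqrt_mul hκ]
  exact Real.sqrt_le_sqrt hμ

theorem progressionSum_le_of_mul_le (hda : Int.gcd d a = 1) (hd : 0 < d) (hN : 1 ≤ N) (hM : 0 < M)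
    (hδ₀ : 0 ≤ δ) (hδ₁ : δ ≤ 1 / 4) (hκ : 0 < κ) (hμκ : κ * N ^ (-1 - δ) ≤ μ)
    (hμN : μ ≤ N ^ (-1 + δ / 100)) (hΦ : HasSecondDiffBounds Φ N μ 9) (hb : Monotone b)
    (hb₀ : ∀ l, 0 ≤ b l) (hbB : ∀ l, b l ≤ B) (hMd : M * d ≤ N ^ (1 / 2 - 11 / 10 * δ)) :
    progressionSum Φ N b M d a ≤ (324 + 22 / √κ) * B * N ^ (1 - 21 / 20 * δ) / d := by
  have hN₀ : 0 < N := by linarith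
  have hB : 0 ≤ B := (hb₀ 0).trans (hbB 0)
  have hμ : 0 < μ := lt_of_lt_of_le (by positivity) hμκ
  have hMdN : M * d ≤ N := hMd.trans (Real.rpow_le_self_of_one_le hN (by linarith))
  have upper : M * d * (N * √μ) ≤ N ^ (1 - 21 / 20 * δ) :=
    calc M * d * (N * √μ)
        ≤ N ^ (1 / 2 - 11 / 10 * δ) * (N ^ (1 : ℝ) * N ^ ((-1 + δ / 100) / 2)) := by
          rw [← sqrt_rpow hN₀.le, Real.rpow_one]
          gcongr
      _ ≤ N ^ (1 / 2 - 11 / 10 * δ) * N ^ (1 + (-1 + δ / 100) / 2) := by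
          gcongr
          exact rpow_mul_rpow_le hN le_rfl
      _ ≤ N ^ (1 - 21 / 20 * δ) := rpow_mul_rpow_le hN (by linarith)
  have lower : 1 / √μ ≤ 1 / √κ * N ^ (1 - 21 / 20 * δ) :=
    calc 1 / √μ ≤ 1 / (√κ * N ^ ((-1 - δ) / 2)) := by
          gcongr
          exact sqrt_mul_rpow_le_sqrt hN₀.le hκ.le hμκ
      _ = 1 / √κ * N ^ (-((-1 - δ) / 2)) := by rw [Real.rpow_neg hN₀.le]; field_simp
      _ ≤ 1 / √κ * N ^ (1 - 21 / 20 * δ) := by gcongr; linarith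
  calc progressionSum Φ N b M d a
      ≤ 2 * M * (B * (6 * 9 * ((N + 2 * (M * d)) * √μ) + 11 / (M * d * √μ))) :=
        progressionSum_le_of_hasSecondDiffBounds hda hd hN₀.le hM hμ (by norm_num) hΦ hb hb₀ hbB
    _ ≤ 2 * M * (B * (6 * 9 * ((N + 2 * N) * √μ) + 11 / (M * d * √μ))) := by gcongr
    _ = (324 * (M * d * (N * √μ)) + 22 * (1 / √μ)) * B / d := by field_simp; ring
    _ ≤ (324 * N ^ (1 - 21 / 20 * δ) + 22 * (1 / √κ * N ^ (1 - 21 / 20 * δ))) * B / d := by gcongr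
    _ = (324 + 22 / √κ) * B * N ^ (1 - 21 / 20 * δ) / d := by ring

theorem exists_nat_mem_Icc_two_mul {x : ℝ} (hx : 1 ≤ x) : ∃ Q : ℕ, (Q : ℝ) ∈ Set.Icc x (2 * x) :=
  ⟨⌈x⌉₊, Nat.le_ceil x, by linarith [Nat.ceil_lt_add_one (a := x) (by linarith)]⟩

theorem exists_nat_lt_mul_mul {x y Q : ℝ} (hx : 0 ≤ x) (hy : 0 < y) (hQ : 0 < Q) :
    ∃ I : ℕ, x < y * (Q * I) ∧ Q * I ≤ x / y + Q := by
  refine ⟨⌊x / (y * Q)⌋₊ + 1, ?_, ?_⟩ <;> push_cast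
  · have := Nat.lt_floor_add_one (x / (y * Q))
    rwa [div_lt_iff₀ (by positivity), mul_comm, mul_assoc] at this
  · calc Q * (⌊x / (y * Q)⌋₊ + 1) ≤ Q * (x / (y * Q) + 1) := by
          gcongr
          exact Nat.floor_le (by positivity)
      _ = x / y + Q := by field_simp

variable {Q₁ Q₂ : ℕ}

theorem sqrt_mul_pow_four_le (hN : 1 ≤ N) (hδ₀ : 0 ≤ δ) (hμN : μ ≤ N ^ (-1 + δ / 100))
    (hdN : d ≤ N ^ (1 / 4 - 19 / 2 * δ)) (hQ₁ : Q₁ ≤ 2 * N ^ (12 * δ))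
    (hQ₂ : Q₂ ≤ 2 * N ^ (9 / 2 * δ)) :
    √(μ * (d ^ 4 * (Q₁ ^ 2 * Q₂))) ≤ 3 * N ^ (-(21 / 5 * δ)) := by
  have hN₀ : 0 ≤ N := by linarith
  refine Real.sqrt_le_iff.2 ⟨by positivity, ?_⟩
  calc μ * (d ^ 4 * (Q₁ ^ 2 * Q₂))
      ≤ N ^ (-1 + δ / 100) * ((N ^ (1 / 4 - 19 / 2 * δ)) ^ 4 *
          ((2 * N ^ (12 * δ)) ^ 2 * (2 * N ^ (9 / 2 * δ)))) := by gcongr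
    _ = 8 * N ^ (-1 + δ / 100 + ((1 / 4 - 19 / 2 * δ) * 4 + (12 * δ * 2 + 9 / 2 * δ))) := by
        simp only [Real.rpow_add (zero_lt_one.trans_le hN), Real.rpow_mul hN₀ _ 4,
          Real.rpow_mul hN₀ (12 * δ) 2, Real.rpow_ofNat]
        ring
    _ ≤ 9 * N ^ (-(21 / 5 * δ) * 2) := by
        gcongr
        · norm_num
        · linarith
    _ = (3 * N ^ (-(21 / 5 * δ))) ^ 2 := by
        rw [Real.rpow_mul hN₀, Real.rpow_two]
        ring

theorem sqrt_mul_rpow_le_mul_sqrt (hd : 0 < d) (hN : 1 ≤ N) (hδ₀ : 0 ≤ δ) (hκ : 0 ≤ κ)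
    (hμκ : κ * N ^ (-1 - δ) ≤ μ) (hMd : N ^ (1 / 2 - 11 / 10 * δ) ≤ M * d)
    (hQ₁ : N ^ (12 * δ) ≤ Q₁) :
    √κ * N ^ (21 / 5 * δ) ≤ M / d * √(μ * (d ^ 4 * Q₁)) := by
  have hN₀ : 0 ≤ N := by linarith
  have hM : 0 ≤ M * d := le_trans (by positivity) hMd
  calc √κ * N ^ (21 / 5 * δ)
      ≤ √κ * (N ^ (1 / 2 - 11 / 10 * δ) * N ^ ((-1 - δ) / 2 + 12 * δ / 2)) := by
        rw [← Real.rpow_add (by positivity)]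
        gcongr
        linarith
    _ ≤ M * d * (√κ * N ^ ((-1 - δ) / 2) * N ^ (12 * δ / 2)) := by
        rw [Real.rpow_add (by positivity)]
        calc _ ≤ √κ * (M * d * (N ^ ((-1 - δ) / 2) * N ^ (12 * δ / 2))) := by gcongr
          _ = _ := by ring
    _ ≤ M * d * (√μ * √Q₁) := by
        rw [← sqrt_rpow hN₀ (12 * δ)]
        have := sqrt_mul_rpow_le_sqrt hN₀ hκ hμκ
        gcongr
    _ = M / d * √(μ * (d ^ 4 * Q₁)) := by
        rw [Real.sqrt_mul' μ (by positivity), Real.sqrt_mul (by positivity),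
          show (d : ℝ) ^ 4 = (d ^ 2) ^ 2 by ring, Real.sqrt_sq (by positivity)]
        field_simp

/-- The exponents `12 δ` and `9 δ / 2` of the box side lengths balance the diagonal terms
`1 / Q₁`, `1 / Q₂` against the main term of the second derivative test. -/
theorem mixed_error_le (hd : 0 < d) (hN : 1 ≤ N) (hδ₀ : 0 ≤ δ) (hκ : 0 < κ)
    (hμκ : κ * N ^ (-1 - δ) ≤ μ) (hμN : μ ≤ N ^ (-1 + δ / 100))
    (hdN : d ≤ N ^ (1 / 4 - 19 / 2 * δ)) (hMd : N ^ (1 / 2 - 11 / 10 * δ) ≤ M * d)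
    (hQ₁ : (Q₁ : ℝ) ∈ Set.Icc (N ^ (12 * δ)) (2 * N ^ (12 * δ)))
    (hQ₂ : (Q₂ : ℝ) ∈ Set.Icc (N ^ (9 / 2 * δ)) (2 * N ^ (9 / 2 * δ))) :
    1 / Q₁ + 1 / Q₂ + 6 * 9 * √(μ * (d ^ 4 * (Q₁ ^ 2 * Q₂))) +
      11 / ((M / d + 1) * √(μ * (d ^ 4 * Q₁))) ≤ (164 + 11 / √κ) * N ^ (-(21 / 5 * δ)) := by
  have hN₀ : 0 < N := by linarith
  have one_div_le {x Q : ℝ} (hx : 21 / 5 * δ ≤ x) (hQ : N ^ x ≤ Q) :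
      1 / Q ≤ N ^ (-(21 / 5 * δ)) :=
    calc 1 / Q ≤ 1 / N ^ (21 / 5 * δ) := by
          gcongr
          exact (Real.rpow_le_rpow_of_exponent_le hN hx).trans hQ
      _ = N ^ (-(21 / 5 * δ)) := by rw [Real.rpow_neg hN₀.le, one_div]
  have last : 11 / ((M / d + 1) * √(μ * (d ^ 4 * Q₁))) ≤ 11 / √κ * N ^ (-(21 / 5 * δ)) :=
    calc 11 / ((M / d + 1) * √(μ * (d ^ 4 * Q₁))) ≤ 11 / (√κ * N ^ (21 / 5 * δ)) := by
          refine div_le_div_of_nonneg_left (by norm_num) (by positivity) ?_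
          refine (sqrt_mul_rpow_le_mul_sqrt hd hN hδ₀ hκ.le hμκ hMd hQ₁.1).trans ?_
          gcongr
          linarith
      _ = 11 / √κ * N ^ (-(21 / 5 * δ)) := by rw [Real.rpow_neg hN₀.le]; field_simp
  have first := one_div_le (by linarith) hQ₁.1
  have second := one_div_le (by linarith) hQ₂.1
  have main := sqrt_mul_pow_four_le hN hδ₀ hμN hdN hQ₁.2 hQ₂.2
  linarith

theorem one_le_div_of_rpow_le (hd : 0 < d) (hN : 1 ≤ N) (hδ₀ : 0 ≤ δ)
    (hdN : d ≤ N ^ (1 / 4 - 19 / 2 * δ)) (hMd : N ^ (1 / 2 - 11 / 10 * δ) ≤ M * d) :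
    1 ≤ M / d := by
  rw [one_le_div₀ (by positivity)]
  refine le_of_mul_le_mul_right (?_ : (d : ℝ) * d ≤ M * d) (by positivity)
  calc (d : ℝ) * d ≤ N ^ (1 / 4 - 19 / 2 * δ) * N ^ (1 / 4 - 19 / 2 * δ) := by gcongr
    _ ≤ N ^ (1 / 2 - 11 / 10 * δ) := rpow_mul_rpow_le hN (by linarith)
    _ ≤ M * d := hMd

theorem box_le_mul_div (hd : 0 < d) (hN : 1 ≤ N) (hM : 0 < M)
    (hMdK : M * d ≤ K * N ^ (1 - 33 / 2 * δ)) (hQ₁ : Q₁ ≤ 2 * N ^ (12 * δ))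
    (hQ₂ : Q₂ ≤ 2 * N ^ (9 / 2 * δ)) : Q₁ * Q₂ ≤ 4 * K * (N / (M * d)) := by
  have hN₀ : 0 < N := by linarith
  rw [← mul_div_assoc, le_div_iff₀ (by positivity)]
  calc (Q₁ * Q₂ : ℝ) * (M * d)
      ≤ 2 * N ^ (12 * δ) * (2 * N ^ (9 / 2 * δ)) * (K * N ^ (1 - 33 / 2 * δ)) := by gcongr
    _ = 4 * K * N ^ (12 * δ + 9 / 2 * δ + (1 - 33 / 2 * δ)) := by
        rw [Real.rpow_add hN₀, Real.rpow_add hN₀]; ring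
    _ = 4 * K * N := by
        rw [show 12 * δ + 9 / 2 * δ + (1 - 33 / 2 * δ) = 1 by ring, Real.rpow_one]

theorem progressionSum_le_of_le_mul (hda : Int.gcd d a = 1) (hd : 0 < d) (hN : 1 ≤ N) (hM : 0 < M)
    (hδ₀ : 0 ≤ δ) (hκ : 0 < κ) (hμκ : κ * N ^ (-1 - δ) ≤ μ)
    (hμN : μ ≤ N ^ (-1 + δ / 100)) (hΦ : HasMixedDiffBounds Φ N μ 9) (hb : ∀ l, |b l| ≤ B)
    (hdN : d ≤ N ^ (1 / 4 - 19 / 2 * δ)) (hMd : N ^ (1 / 2 - 11 / 10 * δ) ≤ M * d)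
    (hMdK : M * d ≤ K * N ^ (1 - 33 / 2 * δ)) :
    progressionSum Φ N b M d a ≤
      4 * (1 + 2 * K) * (164 + 11 / √κ) * B * N ^ (1 - 21 / 20 * δ) / d := by
  have hN₀ : 0 < N := by linarith
  have hB : 0 ≤ B := (abs_nonneg _).trans (hb 0)
  have hμ : 0 < μ := lt_of_lt_of_le (by positivity) hμκ
  obtain ⟨Q₁, hQ₁⟩ := exists_nat_mem_Icc_two_mul (Real.one_le_rpow hN (by positivity : 0 ≤ 12 * δ))
  obtain ⟨Q₂, hQ₂⟩ :=
    exists_nat_mem_Icc_two_mul (Real.one_le_rpow hN (by positivity : 0 ≤ 9 / 2 * δ))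
  have hQ₁₀ : (0 : ℝ) < Q₁ := lt_of_lt_of_le (by positivity) hQ₁.1
  have hQ₂₀ : (0 : ℝ) < Q₂ := lt_of_lt_of_le (by positivity) hQ₂.1
  obtain ⟨I, hI, hI'⟩ := exists_nat_lt_mul_mul (x := 2 * N) (y := M * d) (Q := Q₁ * Q₂)
    (by positivity) (by positivity) (by positivity)
  have one_le := one_le_div_of_rpow_le hd hN hδ₀ hdN hMd
  have blocks_le : Q₁ * (Q₂ * I) ≤ (2 + 4 * K) * (N / (M * d)) := by
    linarith [box_le_mul_div hd hN hM hMdK hQ₁.2 hQ₂.2, mul_div_assoc 2 N (M * d)]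
  have saving : (164 + 11 / √κ) * N ^ (-(21 / 5 * δ)) ≤
      ((164 + 11 / √κ) * N ^ (-(21 / 20 * δ))) ^ 4 := by
    have : 1 ≤ 164 + 11 / √κ := le_add_of_le_of_nonneg (by norm_num) (by positivity)
    rw [mul_pow, ← Real.rpow_mul_natCast hN₀.le]
    gcongr
    · exact le_self_pow₀ this (by norm_num)
    · push_cast; linarith
  calc progressionSum Φ N b M d a
      ≤ d * (B * ((M / d + 1) * (Q₁ * (Q₂ * I))) * ((164 + 11 / √κ) * N ^ (-(21 / 20 * δ)))) :=
        progressionSum_le_of_hasMixedDiffBounds hda hd hN₀ hM hμ (by norm_num) hΦ hb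
          (Nat.cast_pos.1 hQ₁₀) (Nat.cast_pos.1 hQ₂₀) (by linarith) (by positivity)
          ((mixed_error_le hd hN hδ₀ hκ hμκ hμN hdN hMd hQ₁ hQ₂).trans saving)
    _ ≤ d * (B * ((2 * (M / d)) * ((2 + 4 * K) * (N / (M * d)))) *
          ((164 + 11 / √κ) * N ^ (-(21 / 20 * δ)))) := by
        rw [two_mul (M / d)]
        gcongr
    _ = 4 * (1 + 2 * K) * (164 + 11 / √κ) * B * (N * N ^ (-(21 / 20 * δ))) / d := by
        field_simp; ring
    _ = 4 * (1 + 2 * K) * (164 + 11 / √κ) * B * N ^ (1 - 21 / 20 * δ) / d := by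
        rw [sub_eq_add_neg, Real.rpow_add hN₀, Real.rpow_one]

end Exponents

section Phase

variable {γ ε κ : ℝ}

theorem rpow_le_two_rpow_abs_mul_rpow {N η : ℝ} (hN : 0 < N) (hη : η ∈ Set.Icc N (2 * N)) (s : ℝ) :
    η ^ s ≤ 2 ^ |s| * N ^ s := by
  have one_le : 1 ≤ η / N := (one_le_div hN).2 hη.1
  calc η ^ s = (η / N) ^ s * N ^ s := by
        rw [← Real.mul_rpow (by linarith) hN.le, div_mul_cancel₀ _ hN.ne']
    _ ≤ (η / N) ^ |s| * N ^ s := by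
        gcongr
        exact le_abs_self s
    _ ≤ 2 ^ |s| * N ^ s := by
        gcongr
        exact (div_le_iff₀ hN).2 hη.2

theorem eventually_abs_mul_rpow_le (c γ κ₁ : ℝ) (hκ : 0 < κ) (hε : 0 < ε) :
    ∀ᶠ N : ℝ in atTop, ∀ t : ℝ, |t| ≤ N ^ (γ - c - ε) → ∀ h : ℝ, 1 ≤ h →
      ∀ η ∈ Set.Icc N (2 * N), |t * κ₁ * η ^ (c - 2)| ≤ κ * h * N ^ (γ - 2) / 8 := by
  filter_upwards [eventually_gt_atTop 0,
    (tendsto_rpow_atTop hε).eventually_ge_atTop (8 * |κ₁| * 2 ^ |c - 2| / κ)]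
    with N hN large t ht h hh η hη
  rw [div_le_iff₀ hκ] at large
  have hη₀ : 0 ≤ η := hN.le.trans hη.1
  calc |t * κ₁ * η ^ (c - 2)| = |t| * |κ₁| * η ^ (c - 2) := by
        rw [abs_mul, abs_mul, abs_of_nonneg (Real.rpow_nonneg hη₀ _)]
    _ ≤ N ^ (γ - c - ε) * |κ₁| * (2 ^ |c - 2| * N ^ (c - 2)) := by
        gcongr
        exact rpow_le_two_rpow_abs_mul_rpow hN hη _
    _ = 8 * |κ₁| * 2 ^ |c - 2| * N ^ (γ - 2 - ε) / 8 := by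
        rw [show γ - 2 - ε = γ - c - ε + (c - 2) by ring, Real.rpow_add hN]
        ring
    _ ≤ N ^ ε * κ * N ^ (γ - 2 - ε) / 8 := by gcongr
    _ = κ * 1 * N ^ (γ - 2) / 8 := by
        rw [show γ - 2 = ε + (γ - 2 - ε) by ring, Real.rpow_add hN]
        ring_nf
    _ ≤ κ * h * N ^ (γ - 2) / 8 := by gcongr

theorem mul_rpow_mem_Icc {h N : ℝ} (hN : 1 ≤ N) (hκ₀ : 0 < κ) (hκ₁ : κ ≤ 1) (hh : 1 ≤ h)
    (hhN : h ≤ N ^ (1 - γ + ε)) (hε : ε ≤ (1 - γ) / 100) :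
    κ * h * N ^ (γ - 2) / 8 ∈
      Set.Icc (κ / 8 * N ^ (-1 - (1 - γ))) (N ^ (-1 + (1 - γ) / 100)) := by
  have : 0 < N := by linarith
  constructor
  · calc κ / 8 * N ^ (-1 - (1 - γ)) = κ * 1 * N ^ (γ - 2) / 8 := by ring_nf
      _ ≤ κ * h * N ^ (γ - 2) / 8 := by gcongr
  · calc κ * h * N ^ (γ - 2) / 8 ≤ 1 * N ^ (1 - γ + ε) * N ^ (γ - 2) / 1 := by
          gcongr
          norm_num
      _ ≤ N ^ (-1 + (1 - γ) / 100) := by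
          rw [one_mul, div_one]
          exact rpow_mul_rpow_le hN (by linarith)

theorem exists_eventually_progressionSum_phase_le (c : ℝ) (hγ₀ : 3 / 4 ≤ γ) (hγ₁ : γ < 1)
    (hε₀ : 0 < ε) (hε₁ : ε ≤ (1 - γ) / 100) (K : ℝ) :
    ∃ C > 0, ∀ᶠ N : ℝ in atTop, ∀ (t M B : ℝ) (b : ℕ → ℝ) (h d : ℕ) (a : ℤ),
      |t| ≤ N ^ (γ - c - ε) → 0 < M → Monotone b → (∀ l, 0 ≤ b l) → (∀ l, b l ≤ B) →
      1 ≤ h → h ≤ N ^ (1 - γ + ε) → 0 < d → d ≤ N ^ (1 / 4 - 19 / 2 * (1 - γ)) →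
      Int.gcd d a = 1 → M * d ≤ K * N ^ (1 - 33 / 2 * (1 - γ)) →
      progressionSum (phase t c h γ) N b M d a ≤
        C * B * N ^ (1 - 21 / 20 * (1 - γ)) / d := by
  have hκ₀ : 0 < γ * (1 - γ) := mul_pos (by linarith) (by linarith)
  have hκ₁ : γ * (1 - γ) ≤ 1 := mul_le_one₀ hγ₁.le (by linarith) (by linarith)
  have hκ₁' : (γ * (1 - γ)) ^ 2 ≤ 1 := pow_le_one₀ hκ₀.le hκ₁
  refine ⟨max (324 + 22 / √(γ * (1 - γ) / 8))
    (4 * (1 + 2 * K) * (164 + 11 / √((γ * (1 - γ)) ^ 2 / 8))),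
    lt_max_of_lt_left (by positivity), ?_⟩
  filter_upwards [eventually_ge_atTop 1,
    eventually_abs_mul_rpow_le c γ (c * (c - 1)) hκ₀ hε₀,
    eventually_abs_mul_rpow_le c γ ((c * (c - 1)) ^ 2) (pow_pos hκ₀ 2) hε₀]
    with N hN second mixed t M B b h d a ht hM hb hb₀ hbB hh hhN hd hdN hda hMdK
  have hh' : (1 : ℝ) ≤ h := by exact_mod_cast hh
  have hB : 0 ≤ B := (hb₀ 0).trans (hbB 0)
  rcases le_total (M * d) (N ^ (1 / 2 - 11 / 10 * (1 - γ))) with hMd | hMd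
  · have hμ := mul_rpow_mem_Icc hN hκ₀ hκ₁ hh' hhN hε₁
    refine (progressionSum_le_of_mul_le hda hd hN hM (by linarith) (by linarith) (by positivity)
      hμ.1 hμ.2 (hasSecondDiffBounds_phase (by linarith) (by linarith) (by linarith) hγ₁.le
        (second t ht h hh')) hb hb₀ hbB hMd).trans ?_
    gcongr
    exact le_max_left _ _
  · have hμ := mul_rpow_mem_Icc hN (pow_pos hκ₀ 2) hκ₁' hh' hhN hε₁
    refine (progressionSum_le_of_le_mul hda hd hN hM (by linarith) (by positivity)
      hμ.1 hμ.2 (hasMixedDiffBounds_phase (by linarith) (by linarith) (by linarith) hγ₁.le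
        (mixed t ht h hh')) (fun l ↦ by rw [abs_of_nonneg (hb₀ l)]; exact hbB l)
        hdN hMd hMdK).trans ?_
    gcongr
    exact le_max_right _ _

end Phase

section TypeISums

variable {N H D M t c γ : ℝ} {a : ℤ} {am : ℕ → ℂ} {cdh : ℕ → ℕ → ℂ} {b b' : ℕ → ℝ}

/-- The Type I sum `S_I`, with the coefficients `a(m)`, `b(l)`, `c(d, h)` written `am`, `bl`,
`cdh`. -/
noncomputable def typeISum (N H D M t c γ : ℝ) (a : ℤ) (am bl : ℕ → ℂ) (cdh : ℕ → ℕ → ℂ) : ℂ :=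
  ∑ m ∈ Ioc ⌊M⌋₊ ⌊2 * M⌋₊,
    ∑ l ∈ Icc 1 ⌊2 * N⌋₊ with N < ((m * l : ℕ) : ℝ) ∧ ((m * l : ℕ) : ℝ) ≤ 2 * N,
      am m * bl l * ∑ h ∈ Icc 1 ⌊H⌋₊,
        (∑ d ∈ Icc 1 ⌊D⌋₊ with Int.gcd (d : ℕ) a = 1 ∧ (d : ℤ) ∣ ((m * l : ℕ) : ℤ) - a, cdh d h) *
          e (phase t c h γ ((m * l : ℕ) : ℝ))

theorem typeISum_eq_sum_progressions :
    typeISum N H D M t c γ a am (fun l ↦ b l) cdh =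
      ∑ h ∈ Icc 1 ⌊H⌋₊, ∑ d ∈ Icc 1 ⌊D⌋₊ with Int.gcd (d : ℕ) a = 1, ∑ m ∈ Ioc ⌊M⌋₊ ⌊2 * M⌋₊,
        am m * cdh d h * ∑ l ∈ Icc 1 ⌊2 * N⌋₊ with (d : ℤ) ∣ ((m * l : ℕ) : ℤ) - a,
          localTerm (phase t c h γ) N b m l := by
  have summand (m l : ℕ) :
      (if N < ((m * l : ℕ) : ℝ) ∧ ((m * l : ℕ) : ℝ) ≤ 2 * N then
        am m * b l * ∑ h ∈ Icc 1 ⌊H⌋₊,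
          (∑ d ∈ Icc 1 ⌊D⌋₊ with Int.gcd (d : ℕ) a = 1 ∧ (d : ℤ) ∣ ((m * l : ℕ) : ℤ) - a, cdh d h) *
            e (phase t c h γ ((m * l : ℕ) : ℝ)) else 0) =
      ∑ h ∈ Icc 1 ⌊H⌋₊, ∑ d ∈ Icc 1 ⌊D⌋₊ with Int.gcd (d : ℕ) a = 1,
        if (d : ℤ) ∣ ((m * l : ℕ) : ℤ) - a then
          am m * cdh d h * localTerm (phase t c h γ) N b m l else 0 := by
    split_ifs with hml <;> push_cast at hml
    · simp_rw [← filter_filter _ _ (Icc 1 ⌊D⌋₊), sum_filter (fun d : ℕ ↦ (d : ℤ) ∣ _),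
        sum_mul, mul_sum]
      refine sum_congr rfl fun h _ ↦ sum_congr rfl fun d _ ↦ ?_
      rw [localTerm_of_mem hml]
      split_ifs <;> push_cast <;> ring
    · simp [localTerm_eq_zero hml]
  simp_rw [typeISum, sum_filter (fun _ : ℕ ↦ N < _ ∧ _), summand, mul_sum,
    sum_filter (fun _ : ℕ ↦ (_ : ℤ) ∣ _)]
  rw [sum_congr rfl fun m _ ↦ sum_comm, sum_comm]
  refine sum_congr rfl fun h _ ↦ ?_
  rw [sum_congr rfl fun m _ ↦ sum_comm, sum_comm]

theorem norm_typeISum_le (ham : ∀ m, ‖am m‖ ≤ 1) (hcdh : ∀ d h, ‖cdh d h‖ ≤ 1) :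
    ‖typeISum N H D M t c γ a am (fun l ↦ b l) cdh‖ ≤
      ∑ h ∈ Icc 1 ⌊H⌋₊, ∑ d ∈ Icc 1 ⌊D⌋₊ with Int.gcd (d : ℕ) a = 1,
        progressionSum (phase t c h γ) N b M d a := by
  rw [typeISum_eq_sum_progressions]
  refine norm_sum_le_of_le _ fun h _ ↦ norm_sum_le_of_le _ fun d _ ↦
    norm_sum_le_of_le _ fun m _ ↦ ?_
  rw [norm_mul, norm_mul]
  exact mul_le_of_le_one_left (norm_nonneg _) (mul_le_one₀ (ham m) (norm_nonneg _) (hcdh d h))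

theorem progressionSum_congr {Φ : ℝ → ℝ} {d : ℕ} (h : ∀ l ∈ Icc 1 ⌊2 * N⌋₊, b l = b' l) :
    progressionSum Φ N b M d a = progressionSum Φ N b' M d a := by
  refine sum_congr rfl fun m _ ↦ congr_arg _ (sum_congr rfl fun l hl ↦ ?_)
  rw [localTerm, localTerm, h l (mem_filter.1 hl).1]

theorem sum_inv_le_one_add_log {y : ℝ} (hy : 1 ≤ y) {S : Finset ℕ} (hS : S ⊆ Icc 1 ⌊y⌋₊) :
    ∑ d ∈ S, (d : ℝ)⁻¹ ≤ 1 + Real.log y :=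
  calc ∑ d ∈ S, (d : ℝ)⁻¹ ≤ ∑ d ∈ Icc 1 ⌊y⌋₊, (d : ℝ)⁻¹ :=
        sum_le_sum_of_subset_of_nonneg hS fun _ _ _ ↦ by positivity
    _ = harmonic ⌊y⌋₊ := by rw [harmonic_eq_sum_Icc]; push_cast; rfl
    _ ≤ 1 + Real.log y := harmonic_floor_le_one_add_log y hy

theorem one_add_log_two_mul_le {s : ℝ} (hN : 1 ≤ N) (hs : 0 < s) :
    1 + Real.log (2 * N) ≤ (2 + 1 / s) * N ^ s := by
  have log_le := Real.log_le_rpow_div (by linarith : 0 ≤ N) hs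
  have one_le := Real.one_le_rpow hN hs.le
  rw [Real.log_mul (by norm_num) (by linarith), add_mul, one_div_mul_eq_div]
  linarith [Real.log_two_lt_d9]

theorem rpow_mul_one_add_log_sq_le {x y s : ℝ} (hN : 1 ≤ N) (hs : 0 < s) (hxy : x + s * 2 ≤ y) :
    N ^ x * (1 + Real.log (2 * N)) ^ 2 ≤ (2 + 1 / s) ^ 2 * N ^ y := by
  have := Real.log_nonneg (by linarith : 1 ≤ 2 * N)
  calc N ^ x * (1 + Real.log (2 * N)) ^ 2 ≤ N ^ x * ((2 + 1 / s) * N ^ s) ^ 2 := by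
        gcongr
        exact one_add_log_two_mul_le hN hs
    _ = (2 + 1 / s) ^ 2 * (N ^ x * N ^ (s * 2)) := by
        rw [Real.rpow_mul (by linarith), Real.rpow_two]; ring
    _ ≤ (2 + 1 / s) ^ 2 * N ^ y := by
        gcongr
        exact rpow_mul_rpow_le hN hxy

theorem sum_sum_le_of_le_div {f : ℕ → ℕ → ℝ} {P : ℝ} {S : Finset ℕ} (hN : 1 ≤ N) (hP : 0 ≤ P)
    (hH : 0 ≤ H) (hS : S ⊆ Icc 1 ⌊2 * N⌋₊) (hf : ∀ h ∈ Icc 1 ⌊H⌋₊, ∀ d ∈ S, f h d ≤ P / d) :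
    ∑ h ∈ Icc 1 ⌊H⌋₊, ∑ d ∈ S, f h d ≤ H * (P * (1 + Real.log (2 * N))) := by
  have row : ∀ h ∈ Icc 1 ⌊H⌋₊, ∑ d ∈ S, f h d ≤ P * (1 + Real.log (2 * N)) := fun h hh ↦
    calc ∑ d ∈ S, f h d ≤ ∑ d ∈ S, P * (d : ℝ)⁻¹ := sum_le_sum (hf h hh)
      _ ≤ P * (1 + Real.log (2 * N)) := by
          rw [← mul_sum]
          gcongr
          exact sum_inv_le_one_add_log (by linarith) hS
  have := Real.log_nonneg (by linarith : 1 ≤ 2 * N)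
  refine (sum_le_card_nsmul _ _ _ row).trans ?_
  rw [nsmul_eq_mul, Nat.card_Icc, Nat.add_sub_cancel]
  gcongr
  exact Nat.floor_le hH

theorem norm_typeISum_le_of_progressionSum_le {P : ℝ} (hN : 1 ≤ N) (hP : 0 ≤ P) (hH : 0 ≤ H)
    (hDN : D ≤ 2 * N) (ham : ∀ m, ‖am m‖ ≤ 1) (hcdh : ∀ d h, ‖cdh d h‖ ≤ 1)
    (hprog : ∀ h d : ℕ, 1 ≤ h → h ≤ H → 1 ≤ d → d ≤ D → Int.gcd d a = 1 →
      progressionSum (phase t c h γ) N b M d a ≤ P / d) :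
    ‖typeISum N H D M t c γ a am (fun l ↦ b l) cdh‖ ≤ H * (P * (1 + Real.log (2 * N))) := by
  refine (norm_typeISum_le ham hcdh).trans (sum_sum_le_of_le_div hN hP hH
    ((filter_subset _ _).trans (Icc_subset_Icc_right (Nat.floor_le_floor hDN))) fun h hh d hd ↦ ?_)
  obtain ⟨hd, hda⟩ := mem_filter.1 hd
  rw [mem_Icc] at hh hd
  exact hprog h d hh.1 ((Nat.le_floor_iff' (by lia)).1 hh.2) hd.1
    ((Nat.le_floor_iff' (by lia)).1 hd.2) hda

theorem exists_eventually_norm_typeISum_le (c : ℝ) (hγ₀ : 37 / 38 < γ) (hγ₁ : γ < 1) {ε : ℝ}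
    (hε₀ : 0 < ε) (hε₁ : ε ≤ (1 - γ) / 100) (K : ℝ) :
    ∃ C > 0, ∀ᶠ N : ℝ in atTop, ∀ (D M t : ℝ) (a : ℤ) (am : ℕ → ℂ) (b : ℕ → ℝ)
      (cdh : ℕ → ℕ → ℂ), D ≤ N ^ (1 / 4 - 19 / 2 * (1 - γ)) → |t| ≤ N ^ (γ - c - ε) →
      (∀ m, ‖am m‖ ≤ 1) → Monotone b → (∀ l, 0 ≤ b l) → (∀ l : ℕ, b l ≤ 1 + Real.log l) →
      (∀ d h, ‖cdh d h‖ ≤ 1) → 0 < M → M * D ≤ K * N ^ (1 - 33 / 2 * (1 - γ)) →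
      ‖typeISum N (N ^ (1 - γ + ε)) D M t c γ a am (fun l ↦ b l) cdh‖ ≤ C * N ^ (1 - ε) := by
  obtain ⟨C, hC, main⟩ :=
    exists_eventually_progressionSum_phase_le c (by linarith) hγ₁ hε₀ hε₁ K
  have hs : 0 < (1 - γ) / 200 := by linarith
  refine ⟨C * (2 + 1 / ((1 - γ) / 200)) ^ 2, by positivity, ?_⟩
  filter_upwards [main, eventually_ge_atTop 1]
    with N main hN D M t a am b cdh hD ht ham hb hb₀ hb_log hcdh hM hMD
  have hB₀ : 0 ≤ 1 + Real.log (2 * N) := add_nonneg zero_le_one (Real.log_nonneg (by linarith))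
  have truncate : ∀ l ∈ Icc 1 ⌊2 * N⌋₊, b l = min (b l) (1 + Real.log (2 * N)) := fun l hl ↦ by
    rw [mem_Icc, Nat.le_floor_iff (by positivity)] at hl
    have log_le : Real.log l ≤ Real.log (2 * N) :=
      Real.log_le_log (by exact_mod_cast hl.1) hl.2
    exact (min_eq_left ((hb_log l).trans (by gcongr))).symm
  have hDN : D ≤ 2 * N := hD.trans ((Real.rpow_le_self_of_one_le hN (by linarith)).trans
    (by linarith))
  calc _ ≤ N ^ (1 - γ + ε) * (C * (1 + Real.log (2 * N)) * N ^ (1 - 21 / 20 * (1 - γ)) *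
          (1 + Real.log (2 * N))) := by
        refine norm_typeISum_le_of_progressionSum_le hN (by positivity) (by positivity) hDN ham hcdh
          fun h d hh hhH hd hdD hda ↦ ?_
        rw [progressionSum_congr truncate]
        exact main t M _ _ h d a ht hM (hb.min monotone_const)
          (fun l ↦ le_min (hb₀ l) hB₀) (fun l ↦ min_le_right _ _) hh hhH hd (hdD.trans hD) hda
          ((mul_le_mul_of_nonneg_left hdD hM.le).trans hMD)
    _ = C * (N ^ (1 - γ + ε + (1 - 21 / 20 * (1 - γ))) * (1 + Real.log (2 * N)) ^ 2) := by
        rw [Real.rpow_add (by linarith) (1 - γ + ε)]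
        ring
    _ ≤ C * ((2 + 1 / ((1 - γ) / 200)) ^ 2 * N ^ (1 - ε)) :=
        mul_le_mul_of_nonneg_left (rpow_mul_one_add_log_sq_le hN hs (by linarith)) hC.le
    _ = C * (2 + 1 / ((1 - γ) / 200)) ^ 2 * N ^ (1 - ε) := by ring

end TypeISums

theorem rpow_le_rpow_of_nonpos_of_le {N X x y : ℝ} (hN : 1 ≤ N) (hNX : N ≤ X) (hx : x ≤ 0)
    (hxy : x ≤ y) : X ^ x ≤ N ^ y :=
  (Real.rpow_le_rpow_of_nonpos (by linarith) hNX hx).trans (Real.rpow_le_rpow_of_exponent_le hN hxy)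

theorem type_I_estimate_general {γ c : ℝ} (hγ₀ : 37 / 38 < γ) (hγ₁ : γ < 1) (hc : 1 / 4 ≤ c) :
    ∃ ε₀ > 0, ∀ ε : ℝ, 0 < ε → ε < ε₀ → ∀ K : ℝ, ∃ C > 0, ∃ X₀ : ℝ, ∀ X ≥ X₀,
      ∀ (N H D M t : ℝ) (a : ℤ) (am : ℕ → ℂ) (b : ℕ → ℝ) (cdh : ℕ → ℕ → ℂ),
        X ^ (1 - ε) ≤ N → N ≤ X →
        H = N ^ (1 - γ + ε) →
        D ≤ N ^ ((443 / 55) * γ - 173 / 22 - ε + ε / 2) →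
        |t| ≤ X ^ ((1 : ℝ) / 4 - c) →
        (∀ m, ‖am m‖ ≤ 1) →
        Monotone b → (∀ l, 0 ≤ b l) → (∀ l : ℕ, b l ≤ 1 + Real.log l) →
        (∀ d h, ‖cdh d h‖ ≤ 1) →
        0 < M → M ≤ K * N ^ ((31 / 3) * γ - 19 / 2 - ((443 / 55) * γ - 173 / 22 - ε) - ε) →
        ‖typeISum N H D M t c γ a am (fun l ↦ b l) cdh‖ ≤ C * N ^ (1 - ε) := by
  refine ⟨(1 - γ) / 100, by linarith, fun ε hε₀ hε₁ K ↦ ?_⟩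
  obtain ⟨C, hC, main⟩ := exists_eventually_norm_typeISum_le c hγ₀ hγ₁ hε₀ hε₁.le K
  obtain ⟨N₀, main⟩ := eventually_atTop.1 (main.and (eventually_ge_atTop 1))
  obtain ⟨X₀, hX₀⟩ := eventually_atTop.1
    ((tendsto_rpow_atTop (by linarith : 0 < 1 - ε)).eventually_ge_atTop N₀)
  refine ⟨C, hC, X₀, ?_⟩
  rintro X hX N H D M t a am b cdh hXN hNX rfl hD ht ham hb hb₀ hb_log hcdh hM hMK
  obtain ⟨main, hN⟩ := main N ((hX₀ X hX).trans hXN)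
  refine main D M t a am b cdh (hD.trans (Real.rpow_le_rpow_of_exponent_le hN (by linarith)))
    (ht.trans (rpow_le_rpow_of_nonpos_of_le hN hNX (by linarith) (by linarith))) ham hb hb₀ hb_log
    hcdh hM ?_
  calc M * D ≤ K * N ^ ((31 / 3) * γ - 19 / 2 - ((443 / 55) * γ - 173 / 22 - ε) - ε) *
          N ^ ((443 / 55) * γ - 173 / 22 - ε + ε / 2) :=
        (mul_le_mul_of_nonneg_left hD hM.le).trans
          (mul_le_mul_of_nonneg_right hMK (by positivity))
    _ ≤ K * N ^ (1 - 33 / 2 * (1 - γ)) := by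
        have hK : 0 < K := pos_of_mul_pos_left (hM.trans_le hMK) (by positivity)
        rw [mul_assoc]
        gcongr
        exact rpow_mul_rpow_le hN (by linarith)

theorem exists_monotone_eq_ofReal {bl : ℕ → ℂ}
    (h : (∀ l : ℕ, bl l = 1) ∨ ∀ l : ℕ, bl l = (Real.log l : ℂ)) :
    ∃ b : ℕ → ℝ, bl = (fun l ↦ (b l : ℂ)) ∧ Monotone b ∧ (∀ l, 0 ≤ b l) ∧
      ∀ l : ℕ, b l ≤ 1 + Real.log l := by
  rcases h with h | h
  · exact ⟨fun _ ↦ 1, by ext l; simp [h], monotone_const, fun _ ↦ zero_le_one,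
      fun l ↦ le_add_of_nonneg_right (Real.log_natCast_nonneg l)⟩
  · refine ⟨fun l ↦ Real.log l, funext h, fun k l hkl ↦ ?_, fun l ↦ Real.log_natCast_nonneg l,
      fun l ↦ le_add_of_nonneg_left zero_le_one⟩
    rcases k.eq_zero_or_pos with rfl | hk
    · simpa using Real.log_natCast_nonneg l
    · exact Real.log_le_log (by exact_mod_cast hk) (by exact_mod_cast hkl)


open scoped Classical in
/-- Type I estimate (Lemma 8): with `θ = (443/55)γ - 173/22 - ε`, `X^{1-ε} ≤ N ≤ X`,
`H = N^{1-γ+ε}`, `N^θ ≤ D ≤ N^{θ+ε/2}`, `|t| ≤ X^{1/4-c}`, coefficients `|a(m)| ≤ 1`,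
`b(l) = 1` or `b(l) = log l`, `|c(d,h)| = 1`, and `M ≪ N^{(31/3)γ - 19/2 - θ - ε}`,
the Type I sum `S_I = ∑_{m ∼ M} ∑_{N < ml ≤ 2N} a(m) b(l) G(ml)` satisfies
`S_I ≪ N^{1-ε}`, where `G(n) = ∑_{1 ≤ h ≤ H} F_h(n) e(tn^c - hn^γ)` and
`F_h(n) = ∑_{d ≤ D, (d,a)=1, d ∣ n-a} c(d,h)`. -/
theorem type_I_estimate (γ : ℝ) (hγ₁ : 865 / 886 < γ) (hγ₂ : γ < 1)
    (a : ℤ) (ha : a ≠ 0) (c : ℝ) (hc₁ : 1 < c) (hc₂ : c < 3) (hc₃ : c ≠ 2) :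
    ∃ ε₀ : ℝ, 0 < ε₀ ∧ ∀ ε : ℝ, 0 < ε → ε < ε₀ → ∀ K : ℝ, 0 < K →
      ∃ C : ℝ, 0 < C ∧ ∃ X₀ : ℝ, ∀ X : ℝ, X₀ ≤ X →
      ∀ N H D M t : ℝ, ∀ am bl : ℕ → ℂ, ∀ cdh : ℕ → ℕ → ℂ,
        X ^ (1 - ε) ≤ N → N ≤ X →
        H = N ^ (1 - γ + ε) →
        N ^ ((443 / 55) * γ - 173 / 22 - ε) ≤ D →
        D ≤ N ^ ((443 / 55) * γ - 173 / 22 - ε + ε / 2) →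
        |t| ≤ X ^ ((1 : ℝ) / 4 - c) →
        (∀ m : ℕ, ‖am m‖ ≤ 1) →
        ((∀ l : ℕ, bl l = 1) ∨ (∀ l : ℕ, bl l = (Real.log l : ℂ))) →
        (∀ d h : ℕ, ‖cdh d h‖ = 1) →
        0 < M → M ≤ K * N ^ ((31 / 3) * γ - 19 / 2 - ((443 / 55) * γ - 173 / 22 - ε) - ε) →
        ‖∑ m ∈ Finset.Ioc ⌊M⌋₊ ⌊2 * M⌋₊,
            ∑ l ∈ (Finset.Icc 1 ⌊2 * N⌋₊).filter
                (fun l : ℕ => N < ((m * l : ℕ) : ℝ) ∧ ((m * l : ℕ) : ℝ) ≤ 2 * N),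
              am m * bl l *
                ∑ h ∈ Finset.Icc 1 ⌊H⌋₊,
                  (∑ d ∈ (Finset.Icc 1 ⌊D⌋₊).filter
                      (fun d : ℕ => Int.gcd (d : ℤ) a = 1 ∧ (d : ℤ) ∣ (((m * l : ℕ) : ℤ) - a)),
                    cdh d h) *
                  e (t * ((m * l : ℕ) : ℝ) ^ c - (h : ℝ) * ((m * l : ℕ) : ℝ) ^ γ)‖
        ≤ C * N ^ (1 - ε) := by
  obtain ⟨ε₀, hε₀, general⟩ :=
    type_I_estimate_general (γ := γ) (c := c) (by linarith) hγ₂ (by linarith)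
  refine ⟨ε₀, hε₀, fun ε hε hεε₀ K _ ↦ ?_⟩
  obtain ⟨C, hC, X₀, general⟩ := general ε hε hεε₀ K
  refine ⟨C, hC, X₀, fun X hX N H D M t am bl cdh hXN hNX hH _ hD ht ham hbl hcdh hM hMK ↦ ?_⟩
  obtain ⟨b, rfl, hb, hb₀, hb_log⟩ := exists_monotone_eq_ofReal hbl
  exact general X hX N H D M t a am b cdh hXN hNX hH hD ht ham hb hb₀ hb_log
    (fun d h ↦ (hcdh d h).le) hM hMK
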